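/- arXiv:2206.01248 — 11 statements merged into one kernel-verified Lean document; each statement's English description precedes it below -/
import Mathlib

section
/- Let F be a field, n ≥ 1, and let V be a proper F-linear subspace of M_n(F). Then V is a Mathieu subspace of M_n(F) if and only if V does not contain any nonzero idempotent matrix of M_n(F). -/
/-!
If `V` contains a nonzero idempotent `e`, then all powers of `e` are `e`, so the Mathieu property
puts the two-sided ideal `Mₙ(F) e Mₙ(F)` inside `V`; as `Mₙ(F)` is simple, `V` is everything
(`eq_top_of_forall_mul_mul_mem`).

Conversely, suppose all positive powers of `a` lie in `V`. A non-nilpotent matrix `a` has a nonzero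
idempotent of the form `p(a)` with `p(0) = 0`, namely the Fitting projection onto the part where `a`
is invertible (`exists_idempotent_aeval`). Such a `p(a)` is a combination of positive powers of `a`,
hence lies in `V`. So if `V` has no nonzero idempotent then `a` is nilpotent and `b * a ^ m * c`
vanishes for large `m`.
-/

/-- An `F`-subspace (here given as a set) `V` of `Mₙ(F)` is a Mathieu subspace if for all
`a, b, c ∈ Mₙ(F)` such that `a ^ m ∈ V` for all `m ≥ 1`, there exists `N` such that
`b * a ^ m * c ∈ V` for all `m ≥ N`. -/
def IsMathieu {F : Type*} [Field F] {n : ℕ} (V : Set (Matrix (Fin n) (Fin n) F)) : Prop :=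
  ∀ a b c : Matrix (Fin n) (Fin n) F,
    (∀ m : ℕ, 1 ≤ m → a ^ m ∈ V) →
    ∃ N : ℕ, ∀ m : ℕ, N ≤ m → b * a ^ m * c ∈ V

open Polynomial in
/-- The Fitting idempotent: writing the characteristic polynomial as `X ^ r * q` with `q` coprime
to `X`, a Bézout relation `u * X ^ (r + 1) + v * q = 1` makes `u * X ^ (r + 1)` evaluate at `a` to
an idempotent, which vanishes only if `a ^ (r + 1) = 0`. -/
lemma exists_idempotent_aeval {F : Type*} [Field F] {n : ℕ} (a : Matrix (Fin n) (Fin n) F)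
    (ha : ¬ IsNilpotent a) :
    ∃ w : F[X], aeval a (X * w) * aeval a (X * w) = aeval a (X * w) ∧ aeval a (X * w) ≠ 0 := by
  obtain ⟨q, hq, hnd⟩ :=
    exists_eq_pow_rootMultiplicity_mul_and_not_dvd a.charpoly a.charpoly_monic.ne_zero 0
  generalize a.charpoly.rootMultiplicity 0 = r at hq
  rw [C_0, sub_zero] at hq hnd
  have hcop : IsCoprime (X ^ (r + 1)) q :=
    ((irreducible_X.coprime_iff_not_dvd).2 hnd).pow_left
  obtain ⟨u, v, huv⟩ := hcop
  have h0 : aeval a (X ^ r * q) = 0 := by rw [← hq]; exact a.aeval_self_charpoly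
  have hw : X * (u * X ^ r) = u * X ^ (r + 1) := by ring
  refine ⟨u * X ^ r, ?_, ?_⟩
  · have h1 : (X * (u * X ^ r)) * (X * (u * X ^ r)) =
        X * (u * X ^ r) - (X * u * v) * (X ^ r * q) := by
      linear_combination (X * (u * X ^ r)) * huv
    rw [← map_mul, h1, map_sub, map_mul _ (X * u * v), h0, mul_zero, sub_zero]
  · intro he
    refine ha ⟨r + 1, ?_⟩
    have h2 : (X : F[X]) ^ (r + 1) =
        X ^ (r + 1) * (X * (u * X ^ r)) + (X * v) * (X ^ r * q) := by
      linear_combination (-X ^ (r + 1)) * huv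
    have h3 := congrArg (aeval a) h2
    rwa [map_add, map_mul, map_mul _ (X * v), he, h0, mul_zero, mul_zero, add_zero, map_pow,
      aeval_X] at h3

open Polynomial in
lemma aeval_X_mul_mem {F A : Type*} [Field F] [Ring A] [Algebra F A] (V : Submodule F A) (a : A)
    (h : ∀ m : ℕ, 1 ≤ m → a ^ m ∈ V) (w : F[X]) : aeval a (X * w) ∈ V := by
  rw [map_mul, aeval_X, aeval_eq_sum_range, Finset.mul_sum]
  refine V.sum_mem fun i _ => ?_
  rw [mul_smul_comm, ← pow_succ']
  exact V.smul_mem _ (h _ (by omega))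

/-- Simplicity of the matrix algebra, in elementwise form. -/
lemma eq_top_of_forall_mul_mul_mem {F : Type*} [Field F] {n : ℕ}
    (V : Submodule F (Matrix (Fin n) (Fin n) F)) (e : Matrix (Fin n) (Fin n) F) (he : e ≠ 0)
    (h : ∀ b c, b * e * c ∈ V) : V = ⊤ := by
  obtain ⟨k, l, hkl⟩ : ∃ k l, e k l ≠ 0 := by
    by_contra! hc
    exact he (Matrix.ext hc)
  rw [eq_top_iff]
  intro x _
  rw [Matrix.matrix_eq_sum_single x]
  refine V.sum_mem fun i _ => V.sum_mem fun j _ => ?_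
  have := h (Matrix.single i k (x i j * (e k l)⁻¹)) (Matrix.single l j 1)
  rwa [Matrix.single_mul_mul_single, mul_one, inv_mul_cancel_right₀ hkl] at this

/-- A proper subspace `V ⊆ Mₙ(F)` is a Mathieu subspace of `Mₙ(F)` if and only if it contains
no nonzero idempotent of `Mₙ(F)`. -/
theorem stmt0 {F : Type*} [Field F] {n : ℕ} (hn : 1 ≤ n)
    (V : Submodule F (Matrix (Fin n) (Fin n) F)) (hV : V ≠ ⊤) :
    IsMathieu (V : Set (Matrix (Fin n) (Fin n) F)) ↔
      ∀ e : Matrix (Fin n) (Fin n) F, e ∈ V → e * e = e → e = 0 := by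
  constructor
  · intro hM e heV hee
    by_contra he
    have hpow : ∀ m : ℕ, 1 ≤ m → e ^ m = e := fun m hm =>
      IsIdempotentElem.pow_eq hee (by omega)
    refine hV (eq_top_of_forall_mul_mul_mem V e he fun b c => ?_)
    obtain ⟨N, hN⟩ := hM e b c fun m hm => by rw [hpow m hm]; exact heV
    have := hN (N + 1) (by omega)
    rwa [hpow _ (by omega)] at this
  · intro hE a b c ha
    have hnil : IsNilpotent a := by
      by_contra hnil
      obtain ⟨w, hidem, hne⟩ := exists_idempotent_aeval a hnil
      exact hne (hE _ (aeval_X_mul_mem V a ha w) hidem)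
    obtain ⟨N, hN⟩ := hnil
    refine ⟨N, fun m hm => ?_⟩
    rw [pow_eq_zero_of_le hm hN, mul_zero, zero_mul]
    exact V.zero_mem
end

section
/- Let F be a field and n ≥ 1 with char F = 0 or char F > n, and let H be the subspace of M_n(F) consisting of all trace-zero matrices. Then H is the only Mathieu subspace of M_n(F) of codimension 1; that is, every F-linear subspace V of M_n(F) with dim V = n^2 − 1 that is a Mathieu subspace of M_n(F) equals H, and H itself is a Mathieu subspace of M_n(F). -/
open Polynomial in
theorem trace_aeval_X_mul {F : Type*} [Field F] {n : ℕ} (a : Matrix (Fin n) (Fin n) F)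
    (h : ∀ m : ℕ, 1 ≤ m → (a ^ m).trace = 0) (q : F[X]) :
    (aeval a (X * q)).trace = 0 := by
  induction q using Polynomial.induction_on' with
  | add p q hp hq => rw [mul_add, map_add, Matrix.trace_add, hp, hq, add_zero]
  | monomial k c =>
    rw [X_mul_monomial, aeval_monomial, ← Algebra.smul_def, Matrix.trace_smul,
      h _ (Nat.le_add_left 1 k), smul_zero]

theorem idempotent_eq_zero_of_trace_eq_zero {F : Type*} [Field F] {n : ℕ}
    (hchar : ringChar F = 0 ∨ n < ringChar F) (e : Matrix (Fin n) (Fin n) F)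
    (he : e * e = e) (ht : e.trace = 0) : e = 0 := by
  have hid : IsIdempotentElem (Matrix.toLin' e) := by
    rw [IsIdempotentElem, Module.End.mul_eq_comp, ← Matrix.toLin'_mul, he]
  have h1 := (LinearMap.IsIdempotentElem.isProj_range _ hid).trace
  rw [Matrix.trace_toLin'_eq, ht] at h1
  set r := Module.finrank F (LinearMap.range (Matrix.toLin' e)) with hr
  have hle : r ≤ n := by
    simpa using Submodule.finrank_le (LinearMap.range (Matrix.toLin' e))
  have hdvd : ringChar F ∣ r := (ringChar.spec F r).1 h1.symm
  have h0 : r = 0 := by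
    rcases hchar with h | h
    · rw [h] at hdvd
      exact Nat.eq_zero_of_zero_dvd hdvd
    · exact Nat.eq_zero_of_dvd_of_lt hdvd (by omega)
  rw [hr, Submodule.finrank_eq_zero, LinearMap.range_eq_bot] at h0
  exact (LinearEquiv.map_eq_zero_iff _).1 h0

open Polynomial in
theorem exists_pow_eq_zero_of_trace_pow {F : Type*} [Field F] {n : ℕ}
    (hchar : ringChar F = 0 ∨ n < ringChar F) (a : Matrix (Fin n) (Fin n) F)
    (h : ∀ m : ℕ, 1 ≤ m → (a ^ m).trace = 0) : ∃ k : ℕ, a ^ k = 0 := by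
  obtain ⟨g, hg, hnd⟩ := exists_eq_pow_rootMultiplicity_mul_and_not_dvd a.charpoly
    a.charpoly_monic.ne_zero 0
  set k := a.charpoly.rootMultiplicity 0
  rw [C_0, sub_zero] at hg hnd
  have hcop : IsCoprime (X ^ (k + 1)) g :=
    ((irreducible_X.coprime_iff_not_dvd).2 hnd).pow_left
  obtain ⟨s, t, hst⟩ := hcop
  have hch : a ^ k * aeval a g = 0 := by
    have := a.aeval_self_charpoly
    rwa [hg, map_mul, map_pow, aeval_X] at this
  have he0 : aeval a (X * (s * X ^ k)) = 0 := by
    apply idempotent_eq_zero_of_trace_eq_zero hchar _ _ (trace_aeval_X_mul a h _)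
    rw [← map_mul]
    have hp : X * (s * X ^ k) * (X * (s * X ^ k)) =
        X * (s * X ^ k) - a.charpoly * (X * s * t) := by
      rw [hg]
      linear_combination (X * (s * X ^ k)) * hst
    rw [hp, map_sub, map_mul _ a.charpoly, a.aeval_self_charpoly, zero_mul, sub_zero]
  have h1 : aeval a g * aeval a t = 1 := by
    rw [← map_mul]
    have hp : g * t = 1 - X * (s * X ^ k) := by linear_combination hst
    rw [hp, map_sub, he0, map_one, sub_zero]
  exact ⟨k, by rw [← mul_one (a ^ k), ← h1, ← mul_assoc, hch, zero_mul]⟩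

/-- An idempotent equals all its powers, so the two-sided ideal it generates lies in any Mathieu
subspace that contains it; the matrix algebra being simple, it must vanish if the subspace is
proper. -/
theorem eq_zero_of_idempotent_mem {F : Type*} [Field F] {n : ℕ}
    (V : Submodule F (Matrix (Fin n) (Fin n) F)) (hV : IsMathieu (V : Set (Matrix (Fin n) (Fin n) F))) (hne : V ≠ ⊤)
    (e : Matrix (Fin n) (Fin n) F) (he : e * e = e) (hm : e ∈ V) : e = 0 := by
  by_contra h0
  obtain ⟨k, l, hkl⟩ : ∃ k l, e k l ≠ 0 := by
    by_contra! hc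
    exact h0 (Matrix.ext hc)
  have hpow : ∀ m : ℕ, 1 ≤ m → e ^ m = e := fun m hm =>
    IsIdempotentElem.pow_eq he (by omega)
  have hall : ∀ b c, b * e * c ∈ V := by
    intro b c
    obtain ⟨N, hN⟩ := hV e b c (fun m hm' => by rw [hpow m hm']; exact hm)
    have := hN (N + 1) (by omega)
    rwa [hpow _ (by omega)] at this
  apply hne
  rw [eq_top_iff]
  intro A _
  rw [Matrix.matrix_eq_sum_single A]
  refine V.sum_mem fun i _ => V.sum_mem fun j _ => ?_
  have := hall (Matrix.single i k (A i j)) (Matrix.single l j (e k l)⁻¹)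
  rwa [Matrix.single_mul_mul_single, mul_assoc, mul_inv_cancel₀ hkl, mul_one] at this

open Matrix in
/-- The tested idempotents are `Eᵢᵢ + c Eᵢⱼ` and `(eᵢ + eⱼ)(x eᵢ + (1 - x) eⱼ)ᵀ`. -/
theorem eq_smul_trace_of_no_idempotent {F : Type*} [Field F] {n : ℕ} (hn : 1 ≤ n)
    (f : Matrix (Fin n) (Fin n) F →ₗ[F] F)
    (hf : ∀ e : Matrix (Fin n) (Fin n) F, e * e = e → f e = 0 → e = 0) :
    ∃ c : F, f = c • Matrix.traceLinearMap (Fin n) F F := by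
  have hs : ∀ i j (c : F), f (single i j c) = c * f (single i j 1) := by
    intro i j c
    rw [← smul_eq_mul, ← map_smul, smul_single, smul_eq_mul, mul_one]
  have hoff : ∀ i j, i ≠ j → f (single i j 1) = 0 := by
    intro i j hij
    by_contra h
    have := hf (single i i 1 + single i j (-f (single i i 1) / f (single i j 1)))
      (by simp [mul_add, add_mul, hij.symm])
      (by rw [map_add, hs i j (_ / _)]; field_simp; ring)
    have := congrFun (congrFun this i) i
    simp [hij.symm] at this
  have hdiag : ∀ i j, f (single i i 1) = f (single j j 1) := by
    intro i j
    by_contra h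
    have hij : i ≠ j := by
      rintro rfl
      exact h rfl
    have hd : f (single i i 1) - f (single j j 1) ≠ 0 := sub_ne_zero.2 h
    -- `x` solves `x f(Eᵢᵢ) + (1 - x) f(Eⱼⱼ) = 0`.
    obtain ⟨x, hx⟩ : ∃ x : F, x * f (single i i 1) + (1 - x) * f (single j j 1) = 0 :=
      ⟨-f (single j j 1) / (f (single i i 1) - f (single j j 1)), by field_simp; ring⟩
    have h0 := hf (single i i x + single i j (1 - x) + single j i x + single j j (1 - x))
      (by
        simp only [mul_add, add_mul, single_mul_single_same, ne_eq, hij, hij.symm,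
          not_false_eq_true, single_mul_single_of_ne, add_zero, zero_add]
        ext p q
        simp only [Matrix.add_apply, single_apply]
        split_ifs <;> ring)
      (by
        rw [map_add, map_add, map_add, hs i i, hs i j, hs j i, hs j j, hoff i j hij,
          hoff j i hij.symm]
        linear_combination hx)
    have h1 := congrFun (congrFun h0 i) i
    have h2 := congrFun (congrFun h0 i) j
    simp [hij, hij.symm] at h1 h2
    simp [h1] at h2
  refine ⟨f (single ⟨0, hn⟩ ⟨0, hn⟩ 1), Matrix.ext_linearMap _ fun i j => ?_⟩
  ext
  by_cases hij : i = j
  · subst hij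
    simp [hdiag i ⟨0, hn⟩]
  · simp [hoff i j hij, hij]

/-- If `char F = 0` or `char F > n`, then the trace-zero subspace `H` is the only Mathieu
subspace of `Mₙ(F)` of codimension `1`. -/
theorem stmt1 {F : Type*} [Field F] {n : ℕ} (hn : 1 ≤ n)
    (hchar : ringChar F = 0 ∨ n < ringChar F) :
    IsMathieu ((LinearMap.ker (Matrix.traceLinearMap (Fin n) F F) :
        Submodule F (Matrix (Fin n) (Fin n) F)) : Set (Matrix (Fin n) (Fin n) F)) ∧
    ∀ V : Submodule F (Matrix (Fin n) (Fin n) F),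
      Module.finrank F V = n ^ 2 - 1 →
      IsMathieu (V : Set (Matrix (Fin n) (Fin n) F)) →
      V = LinearMap.ker (Matrix.traceLinearMap (Fin n) F F) := by
  constructor
  · intro a b c h
    obtain ⟨k, hk⟩ := exists_pow_eq_zero_of_trace_pow hchar a (fun m hm => by simpa using h m hm)
    refine ⟨k, fun m hm => ?_⟩
    rw [pow_eq_zero_of_le hm hk, mul_zero, zero_mul]
    exact Submodule.zero_mem _
  · intro V hdim hV
    have hfr : Module.finrank F (Matrix (Fin n) (Fin n) F) = n ^ 2 := by
      simp [Module.finrank_matrix, sq]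
    have hpos : 0 < n ^ 2 := by positivity
    have hne : V ≠ ⊤ := by
      rintro rfl
      rw [finrank_top, hfr] at hdim
      omega
    obtain ⟨f, hf0, hle⟩ := V.exists_le_ker_of_lt_top (lt_top_iff_ne_top.2 hne)
    have hVf : V = LinearMap.ker f := by
      apply Submodule.eq_of_le_of_finrank_eq hle
      have hlt := Submodule.finrank_lt (s := LinearMap.ker f)
        (fun h => hf0 (LinearMap.ker_eq_top.1 h))
      have := Submodule.finrank_mono hle
      omega
    obtain ⟨c, hc⟩ := eq_smul_trace_of_no_idempotent hn f fun e he hfe =>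
      eq_zero_of_idempotent_mem V hV hne e he (by rw [hVf]; exact hfe)
    have hc0 : c ≠ 0 := by
      rintro rfl
      exact hf0 (by rw [hc, zero_smul])
    rw [hVf, hc, LinearMap.ker_smul _ _ hc0]
end

section
/- Let F be a field of positive characteristic p and n ≥ 1 with p ≤ n. Then M_n(F) has no Mathieu subspace of codimension 1; that is, no F-linear subspace V of M_n(F) with dim V = n^2 − 1 is a Mathieu subspace of M_n(F). -/
/-- A nonzero idempotent generates the whole matrix algebra as a two-sided ideal. -/
theorem eq_top_of_idempotent_mem {F : Type*} [Field F] {n : ℕ}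
    (V : Submodule F (Matrix (Fin n) (Fin n) F))
    (hV : IsMathieu (V : Set (Matrix (Fin n) (Fin n) F)))
    (e : Matrix (Fin n) (Fin n) F) (he : e * e = e) (he0 : e ≠ 0) (heV : e ∈ V) : V = ⊤ := by
  have hpow : ∀ m : ℕ, 1 ≤ m → e ^ m = e := fun m hm =>
    IsIdempotentElem.pow_eq (show IsIdempotentElem e from he) (by omega)
  have hbc : ∀ b c, b * e * c ∈ V := by
    intro b c
    obtain ⟨N, hN⟩ := hV e b c (fun m hm => by rw [hpow m hm]; exact heV)
    have h := hN (N + 1) (by omega)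
    rwa [hpow _ (by omega)] at h
  obtain ⟨i, j, hij⟩ : ∃ i j, e i j ≠ 0 := by
    by_contra! h
    exact he0 (by ext i j; exact h i j)
  rw [eq_top_iff]
  intro A _
  rw [Matrix.matrix_eq_sum_single A]
  refine V.sum_mem fun k _ => V.sum_mem fun l _ => ?_
  have h := hbc (Matrix.single k i (A k l * (e i j)⁻¹)) (Matrix.single j l 1)
  rw [Matrix.single_mul_mul_single] at h
  simpa [hij] using h

theorem exists_idempotent {F : Type*} [Field F] {n p : ℕ} [CharP F p] (hp : 0 < p) (hpn : p ≤ n)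
    (f : Matrix (Fin n) (Fin n) F →ₗ[F] F) :
    ∃ e : Matrix (Fin n) (Fin n) F, e * e = e ∧ e ≠ 0 ∧ f e = 0 := by
  have hs : ∀ i j (t : F), f (Matrix.single i j t) = t * f (Matrix.single i j 1) := by
    intro i j t
    rw [← smul_eq_mul, ← map_smul, Matrix.smul_single, smul_eq_mul, mul_one]
  by_cases hoff : ∃ i j, i ≠ j ∧ f (Matrix.single i j 1) ≠ 0
  · obtain ⟨i, j, hij, h⟩ := hoff
    refine ⟨Matrix.single i i 1 +
      Matrix.single i j (-f (Matrix.single i i 1) / f (Matrix.single i j 1)), ?_, ?_, ?_⟩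
    · simp [add_mul, mul_add, hij.symm]
    · intro h0
      have := congrFun (congrFun h0 i) i
      simp [hij.symm] at this
    · rw [map_add, hs i j]
      field_simp
      ring
  · push Not at hoff
    by_cases hdiag : ∃ i j, f (Matrix.single i i 1) ≠ f (Matrix.single j j 1)
    · obtain ⟨i, j, h⟩ := hdiag
      have hij : i ≠ j := by rintro rfl; exact h rfl
      have hd : f (Matrix.single j j 1) - f (Matrix.single i i 1) ≠ 0 := sub_ne_zero.2 h.symm
      -- Solves `a * f Eᵢᵢ + (1 - a) * f Eⱼⱼ = 0`.
      obtain ⟨a, ha⟩ : ∃ a, a = f (Matrix.single j j 1) /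
        (f (Matrix.single j j 1) - f (Matrix.single i i 1)) := ⟨_, rfl⟩
      refine ⟨Matrix.single i i a + Matrix.single i j a + Matrix.single j i (1 - a) +
        Matrix.single j j (1 - a), ?_, ?_, ?_⟩
      · ext k l
        simp only [add_mul, mul_add, Matrix.single_mul_single_same,
          Matrix.single_mul_single_of_ne _ _ _ _ hij,
          Matrix.single_mul_single_of_ne _ _ _ _ hij.symm, Matrix.add_apply, Matrix.single_apply,
          Matrix.zero_apply]
        split_ifs <;> ring
      · intro h0
        have h1 := congrFun (congrFun h0 i) i
        have h2 := congrFun (congrFun h0 j) j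
        simp [hij, hij.symm] at h1 h2
        simp [h1] at h2
      · simp only [map_add]
        rw [hs i i, hs i j, hs j i, hs j j, hoff i j hij, hoff j i hij.symm, ha]
        field_simp
        ring
    · push Not at hdiag
      obtain ⟨S, -, hS⟩ := Finset.exists_subset_card_eq (s := (Finset.univ : Finset (Fin n)))
        (n := p) (by simpa using hpn)
      obtain ⟨i, hi⟩ : S.Nonempty := by rw [← Finset.card_pos]; omega
      have hSd : ∑ k ∈ S, Matrix.single k k (1 : F) =
          Matrix.diagonal (fun k => if k ∈ S then 1 else 0) := by
        ext k l
        rw [Matrix.sum_apply]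
        by_cases hkl : k = l
        · simp [Matrix.single_apply, hkl]
        · rw [Matrix.diagonal_apply_ne _ hkl]
          refine Finset.sum_eq_zero fun x _ => ?_
          rw [Matrix.single_apply, if_neg]
          rintro ⟨h1, h2⟩
          exact hkl (h1.symm.trans h2)
      refine ⟨∑ k ∈ S, Matrix.single k k 1, ?_, ?_, ?_⟩
      · rw [hSd, Matrix.diagonal_mul_diagonal]
        simp
      · rw [hSd]
        intro h0
        have := congrFun (congrFun h0 i) i
        simp [hi] at this
      · rw [map_sum, Finset.sum_congr rfl (fun k _ => hdiag k i), Finset.sum_const, hS,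
          nsmul_eq_mul, CharP.cast_eq_zero, zero_mul]

/-- If `F` has positive characteristic `p ≤ n`, then `Mₙ(F)` has no Mathieu subspace of
codimension `1`. -/
theorem stmt2 {F : Type*} [Field F] {n p : ℕ} (hn : 1 ≤ n)
    [CharP F p] (hp : 0 < p) (hpn : p ≤ n)
    (V : Submodule F (Matrix (Fin n) (Fin n) F))
    (hdim : Module.finrank F V = n ^ 2 - 1) :
    ¬ IsMathieu (V : Set (Matrix (Fin n) (Fin n) F)) := by
  intro hV
  have hfull : Module.finrank F (Matrix (Fin n) (Fin n) F) = n ^ 2 := by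
    simp [Module.finrank_matrix, sq]
  have hn2 : 0 < n ^ 2 := by positivity
  have htop : V ≠ ⊤ := by
    rintro rfl
    rw [finrank_top, hfull] at hdim
    omega
  obtain ⟨f, hf, hle⟩ := V.exists_le_ker_of_lt_top (lt_top_iff_ne_top.2 htop)
  have hker : V = LinearMap.ker f := by
    refine Submodule.eq_of_le_of_finrank_le hle ?_
    have h1 : Module.finrank F (LinearMap.ker f) < n ^ 2 := by
      rw [← hfull]
      exact Submodule.finrank_lt (fun h => hf (LinearMap.ker_eq_top.1 h))
    omega
  obtain ⟨e, he, he0, hfe⟩ := exists_idempotent hp hpn f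
  exact htop (eq_top_of_idempotent_mem V hV e he he0 (by rw [hker]; exact hfe))
end

section
/- Let F be a field, n ≥ 1, X an abelian group, and suppose M_n(F) = ⊕_{ω ∈ X} M_ω is a direct sum decomposition into F-linear subspaces such that M_ω · M_{ω'} ⊆ M_{ω+ω'} for all ω, ω' ∈ X (a grading of the F-algebra M_n(F) by X, so in particular the identity matrix lies in M_0) and such that Tr(x) = 0 for every x ∈ M_ω with ω ≠ 0. Let π_ω : M_n(F) → M_ω denote the projections, let f : X → ℚ be a group homomorphism with f(ω) ≠ 0 for every ω ≠ 0 with M_ω ≠ 0, and let Λ ∈ M_0 be an element commuting with every element of M_0 and such that Tr(Λ e) ≠ 0 for every nonzero idempotent e ∈ M_0. Let V be an F-linear subspace of M_n(F) such that Tr(Λ v) = 0 and Tr(Λ π_0(v)) = 0 for all v ∈ V. If π_ω(V) · π_{−ω'}(V) = 0 for all ω, ω' ∈ X with f(ω) > 0 and f(ω') > 0, then V is a Mathieu subspace of M_n(F). -/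
open Polynomial in
/-- A Fitting idempotent of `a`, as a polynomial in `a` without constant term. -/
lemma exists_fitting_idempotent {F : Type*} [Field F] {n : ℕ} (a : Matrix (Fin n) (Fin n) F) :
    ∃ w : F[X], aeval a (w * X) * aeval a (w * X) = aeval a (w * X) ∧
      (aeval a (w * X) = 0 → IsNilpotent a) := by
  -- The extra factor `X` makes the multiplicity of the root `0` positive.
  have hne : X * a.charpoly ≠ 0 := mul_ne_zero X_ne_zero a.charpoly_monic.ne_zero
  obtain ⟨q, hq, hqd⟩ := exists_eq_pow_rootMultiplicity_mul_and_not_dvd _ hne 0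
  rw [C_0, sub_zero] at hq hqd
  obtain ⟨k, hk⟩ : ∃ k, rootMultiplicity 0 (X * a.charpoly) = k + 1 := by
    refine Nat.exists_eq_succ_of_ne_zero ?_
    have : 0 < rootMultiplicity 0 (X * a.charpoly) :=
      (rootMultiplicity_pos hne).2 (by simp)
    omega
  rw [hk] at hq
  have hann : aeval a (X ^ (k + 1) * q) = 0 := by
    rw [← hq, map_mul, Matrix.aeval_self_charpoly, mul_zero]
  obtain ⟨u, v, huv⟩ : IsCoprime (X ^ (k + 1)) q :=
    ((irreducible_X.coprime_iff_not_dvd).2 hqd).pow_left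
  have hg : u * X ^ k * X = u * X ^ (k + 1) := by ring
  refine ⟨u * X ^ k, ?_, fun h0 => ⟨k + 1, ?_⟩⟩
  · have h : u * X ^ (k + 1) * (u * X ^ (k + 1)) =
        u * X ^ (k + 1) - u * v * (X ^ (k + 1) * q) := by
      linear_combination (u * X ^ (k + 1)) * huv
    rw [hg, ← map_mul, h, map_sub, map_mul _ (u * v), hann, mul_zero, sub_zero]
  · have h : (X : F[X]) ^ (k + 1) = X ^ (k + 1) * (u * X ^ k * X) + v * (X ^ (k + 1) * q) := by
      linear_combination -(X ^ (k + 1)) * huv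
    have := congrArg (aeval a) h
    rwa [map_add, map_mul, map_mul _ v, hann, h0, mul_zero, mul_zero, add_zero, map_pow,
      aeval_X] at this

open Polynomial in
/-- A subspace of matrices whose only idempotent is `0` is a Mathieu subspace. -/
lemma isMathieu_of_idempotent_eq_zero {F : Type*} [Field F] {n : ℕ}
    (V : Submodule F (Matrix (Fin n) (Fin n) F))
    (h : ∀ e ∈ V, e * e = e → e = 0) : IsMathieu (V : Set (Matrix (Fin n) (Fin n) F)) := by
  intro a b c ha
  obtain ⟨w, hw, hnil⟩ := exists_fitting_idempotent a
  have hmem : ∀ w : F[X], aeval a (w * X) ∈ V := by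
    intro w
    induction w using Polynomial.induction_on' with
    | add p q hp hq => rw [add_mul, map_add]; exact V.add_mem hp hq
    | monomial k r =>
      rw [← C_mul_X_pow_eq_monomial, mul_assoc, ← pow_succ, map_mul, aeval_C, map_pow, aeval_X,
        ← Algebra.smul_def]
      exact V.smul_mem r (ha (k + 1) (by omega))
  obtain ⟨N, hN⟩ := hnil (h _ (hmem w) hw)
  refine ⟨N, fun m hm => ?_⟩
  rw [pow_eq_zero_of_le hm hN, mul_zero, zero_mul]
  exact V.zero_mem

/-- The elements all of whose homogeneous components have `f`-degree at least `q`. -/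
def degreeGE {F A X : Type*} [Field F] [Ring A] [Algebra F A] [AddCommGroup X]
    (M : X → Submodule F A) (f : X →+ ℚ) (q : ℚ) : Submodule F A :=
  ⨆ ω : X, ⨆ _ : q ≤ f ω, M ω

lemma mem_degreeGE {F A X : Type*} [Field F] [Ring A] [Algebra F A] [AddCommGroup X]
    (M : X → Submodule F A) (f : X →+ ℚ) {q : ℚ} {ω : X} (hω : q ≤ f ω) {x : A} (hx : x ∈ M ω) :
    x ∈ degreeGE M f q :=
  (le_iSup₂_of_le ω hω le_rfl : M ω ≤ degreeGE M f q) hx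

lemma degreeGE_mul_le {F A X : Type*} [Field F] [Ring A] [Algebra F A] [AddCommGroup X]
    (M : X → Submodule F A) (hmul : ∀ ω ω' : X, ∀ x ∈ M ω, ∀ y ∈ M ω', x * y ∈ M (ω + ω'))
    (f : X →+ ℚ) (q r : ℚ) :
    degreeGE M f q * degreeGE M f r ≤ degreeGE M f (q + r) := by
  unfold degreeGE
  simp only [Submodule.iSup_mul, Submodule.mul_iSup, iSup_le_iff]
  intro j hj i hi
  refine Submodule.mul_le.2 fun x hx y hy => mem_degreeGE M f ?_ (hmul _ _ x hx y hy)
  rw [map_add]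
  exact add_le_add hi hj

/-- In a finite-dimensional graded algebra, a sum of homogeneous elements of positive degree is
nilpotent: only finitely many components are nonzero, so the degrees that occur are bounded. -/
lemma isNilpotent_of_pos_degree {F A X : Type*} [Field F] [Ring A] [Algebra F A]
    [FiniteDimensional F A] [AddCommGroup X] [DecidableEq X]
    (M : X → Submodule F A) [DirectSum.Decomposition M]
    (hmul : ∀ ω ω' : X, ∀ x ∈ M ω, ∀ y ∈ M ω', x * y ∈ M (ω + ω'))
    (f : X →+ ℚ) (s : Finset X) (hs : ∀ ω ∈ s, 0 < f ω) (x : X → A) (hx : ∀ ω ∈ s, x ω ∈ M ω) :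
    IsNilpotent (∑ ω ∈ s, x ω) := by
  have hind : iSupIndep M := (DirectSum.Decomposition.isInternal M).submodule_iSupIndep
  have hfin : {ω | M ω ≠ ⊥}.Finite := WellFoundedGT.finite_ne_bot_of_iSupIndep hind
  obtain ⟨B, hB⟩ := (hfin.image f).bddAbove
  obtain ⟨q, hq0, hq⟩ : ∃ q : ℚ, 0 < q ∧ ∀ ω ∈ s, q ≤ f ω := by
    rcases s.eq_empty_or_nonempty with rfl | hne
    · exact ⟨1, one_pos, by simp⟩
    · obtain ⟨ω₀, h₀, hmin⟩ := s.exists_min_image f hne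
      exact ⟨f ω₀, hs _ h₀, hmin⟩
  have hP : ∑ ω ∈ s, x ω ∈ degreeGE M f q :=
    Submodule.sum_mem _ fun ω hω => mem_degreeGE M f (hq ω hω) (hx ω hω)
  have hpow : ∀ k : ℕ, (∑ ω ∈ s, x ω) ^ (k + 1) ∈ degreeGE M f ((k + 1 : ℕ) * q) := by
    intro k
    induction k with
    | zero => simpa using hP
    | succ k ih =>
      rw [pow_succ]
      have := degreeGE_mul_le M hmul f _ _ (Submodule.mul_mem_mul ih hP)
      convert this using 2
      push_cast; ring
  obtain ⟨k, hk⟩ := exists_nat_gt (B / q)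
  have hbot : degreeGE M f ((k + 1 : ℕ) * q) = ⊥ := by
    simp only [degreeGE, iSup_eq_bot]
    intro ω hω
    by_contra hne
    have h1 : f ω ≤ B := hB ⟨ω, hne, rfl⟩
    have h2 : B < k * q := (div_lt_iff₀ hq0).1 hk
    push_cast at hω
    linarith
  have := hpow k
  rw [hbot, Submodule.mem_bot] at this
  exact ⟨k + 1, this⟩

/-- `Z` is congruent to an idempotent modulo nilpotents; the trace condition kills that idempotent,
and then `Z` has square zero. -/
lemma sq_zero_of_trace {F : Type*} [Field F] {n : ℕ} (S : Submodule F (Matrix (Fin n) (Fin n) F))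
    (hS : ∀ x ∈ S, ∀ y ∈ S, x * y ∈ S) (Λ : Matrix (Fin n) (Fin n) F)
    (hΛcomm : ∀ x ∈ S, Λ * x = x * Λ)
    (hΛe : ∀ e ∈ S, e * e = e → e ≠ 0 → Matrix.trace (Λ * e) ≠ 0)
    (Z : Matrix (Fin n) (Fin n) F) (hZ : Z ∈ S) (htr : Matrix.trace (Λ * Z) = 0)
    (hn : (Z - Z * Z) * (Z - Z * Z) = 0) : Z * Z = 0 := by
  set E := 3 • (Z * Z) - 2 • (Z * Z * Z) with hE
  have hZZ := hS _ hZ _ hZ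
  have hES : E ∈ S := S.sub_mem (S.smul_of_tower_mem 3 hZZ)
    (S.smul_of_tower_mem 2 (hS _ hZZ _ hZ))
  have hEE : E * E = E := by
    have : E * E - E = ((Z - Z * Z) * (Z - Z * Z)) * (4 • (Z * Z) - 4 • Z - 3) := by
      rw [hE]; noncomm_ring
    rw [hn, zero_mul] at this
    exact sub_eq_zero.1 this
  have hsq : (Z - E) * (Z - E) = 0 := by
    have : (Z - E) * (Z - E) =
        ((Z - Z * Z) * (Z - Z * Z)) * ((1 - 2 • Z) * (1 - 2 • Z)) := by
      rw [hE]; noncomm_ring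
    rw [this, hn, zero_mul]
  have hnil : IsNilpotent (Λ * (Z - E)) := by
    refine ⟨2, ?_⟩
    rw [Commute.mul_pow (hΛcomm _ (S.sub_mem hZ hES)), pow_two (Z - E), hsq, mul_zero]
  have htr0 := (Matrix.isNilpotent_trace_of_isNilpotent hnil).eq_zero
  rw [mul_sub, Matrix.trace_sub, htr, zero_sub, neg_eq_zero] at htr0
  have hE0 : E = 0 := by
    by_contra hne
    exact hΛe E hES hEE hne htr0
  have : Z * Z = E * (2 • Z - 1) + 4 • ((Z - Z * Z) * (Z - Z * Z)) := by
    rw [hE]; noncomm_ring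
  rw [this, hE0, hn, zero_mul, smul_zero, add_zero]

/-- An idempotent `P + Z + N` with `P`, `N` nilpotent is zero as soon as the products that are out
of the order `N`, `Z`, `P` vanish, together with `Z * Z`. -/
lemma idempotent_eq_zero_of_parts {A : Type*} [Ring A] {e P Z N : A} (he : e * e = e)
    (hsum : e = P + Z + N) (hP : IsNilpotent P) (hN : IsNilpotent N) (hPN : P * N = 0)
    (hPZ : P * Z = 0) (hZN : Z * N = 0) (hZZ : Z * Z = 0) : e = 0 := by
  have hPe : P * e = P * P := by rw [hsum, mul_add, mul_add, hPZ, hPN, add_zero, add_zero]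
  have hZe : Z * e = Z * P := by rw [hsum, mul_add, mul_add, hZZ, hZN, add_zero, add_zero]
  have hPk : ∀ k : ℕ, P * e = P ^ k * (P * e) := by
    intro k
    induction k with
    | zero => simp
    | succ k ih =>
      calc P * e = P * e * e := by rw [mul_assoc, he]
        _ = P ^ k * (P * e) * e := by rw [← ih]
        _ = P ^ (k + 1) * (P * e) := by rw [hPe, pow_succ]; simp only [mul_assoc, hPe]
  have hPe0 : P * e = 0 := by
    obtain ⟨k, hk⟩ := hP
    rw [hPk k, hk, zero_mul]
  have hZe0 : Z * e = 0 := by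
    rw [← he, ← mul_assoc, hZe, mul_assoc, hPe0, mul_zero]
  have hNe : N * e = e := by
    have : e * e = P * e + Z * e + N * e := by rw [← add_mul, ← add_mul, ← hsum]
    rw [he, hPe0, hZe0, zero_add, zero_add] at this
    exact this.symm
  have hNk : ∀ k : ℕ, N ^ k * e = e := by
    intro k
    induction k with
    | zero => simp
    | succ k ih => rw [pow_succ, mul_assoc, hNe, ih]
  obtain ⟨k, hk⟩ := hN
  rw [← hNk k, hk, zero_mul]

/-- Let `Mₙ(F) = ⊕_{ω ∈ X} M_ω` be a grading of the algebra `Mₙ(F)` by an abelian group `X`,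
with trace vanishing on homogeneous components of nonzero degree. Let `f : X → ℚ` be a group
homomorphism nonvanishing on nonzero weights, and `Λ ∈ M_0` central in `M_0` with
`Tr(Λe) ≠ 0` for every nonzero idempotent `e ∈ M_0`. If `V` is a subspace with `V` and
`π₀(V)` orthogonal to `Λ`, and `π_ω(V)·π_{-ω'}(V) = 0` for all `ω, ω'` with `f(ω), f(ω') > 0`,
then `V` is a Mathieu subspace of `Mₙ(F)`. -/
theorem stmt4 {F : Type*} [Field F] {n : ℕ} (hn : 1 ≤ n)
    {X : Type*} [AddCommGroup X] [DecidableEq X]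
    (M : X → Submodule F (Matrix (Fin n) (Fin n) F))
    [DirectSum.Decomposition M]
    (hmul : ∀ ω ω' : X, ∀ x ∈ M ω, ∀ y ∈ M ω', x * y ∈ M (ω + ω'))
    (hone : (1 : Matrix (Fin n) (Fin n) F) ∈ M 0)
    (htr : ∀ ω : X, ω ≠ 0 → ∀ x ∈ M ω, Matrix.trace x = 0)
    (f : X →+ ℚ)
    (hf : ∀ ω : X, ω ≠ 0 → M ω ≠ ⊥ → f ω ≠ 0)
    (Λ : Matrix (Fin n) (Fin n) F) (hΛ0 : Λ ∈ M 0)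
    (hΛcomm : ∀ x ∈ M 0, Λ * x = x * Λ)
    (hΛe : ∀ e : Matrix (Fin n) (Fin n) F,
      e ∈ M 0 → e * e = e → e ≠ 0 → Matrix.trace (Λ * e) ≠ 0)
    (V : Submodule F (Matrix (Fin n) (Fin n) F))
    (hV1 : ∀ v ∈ V, Matrix.trace (Λ * v) = 0)
    (hV2 : ∀ v ∈ V, Matrix.trace
      (Λ * ((DirectSum.decompose M v 0 : M 0) : Matrix (Fin n) (Fin n) F)) = 0)
    (hVmul : ∀ ω ω' : X, 0 < f ω → 0 < f ω' → ∀ v ∈ V, ∀ v' ∈ V,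
      ((DirectSum.decompose M v ω : M ω) : Matrix (Fin n) (Fin n) F) *
        ((DirectSum.decompose M v' (-ω') : M (-ω')) : Matrix (Fin n) (Fin n) F) = 0) :
    IsMathieu (V : Set (Matrix (Fin n) (Fin n) F)) := by
  classical
  refine isMathieu_of_idempotent_eq_zero V fun e heV hee => ?_
  set c : X → Matrix (Fin n) (Fin n) F := fun ω => (DirectSum.decompose M e ω : M ω) with hc
  have hcM : ∀ ω, c ω ∈ M ω := fun ω => (DirectSum.decompose M e ω).2
  set s := (DirectSum.decompose M e).support with hs
  set sp := s.filter (fun ω => 0 < f ω) with hsp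
  set sn := s.filter (fun ω => f ω < 0) with hsn
  have hpos : ∀ ω ∈ sp, 0 < f ω := fun ω h => (Finset.mem_filter.1 h).2
  have hneg : ∀ ω ∈ sn, f ω < 0 := fun ω h => (Finset.mem_filter.1 h).2
  have hcc : ∀ i ∈ sp, ∀ j ∈ sn, c i * c j = 0 := by
    intro i hi j hj
    have := hVmul i (-j) (hpos i hi) (by rw [map_neg]; linarith [hneg j hj]) e heV e heV
    rwa [neg_neg] at this
  -- A degree in the support on which `f` vanishes is `0`.
  have hsum : e = (∑ ω ∈ sp, c ω) + c 0 + ∑ ω ∈ sn, c ω := by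
    have h1 : ∑ ω ∈ s, c ω = e := DirectSum.sum_support_decompose M e
    have h2 : ∀ ω ∈ s, c ω = (if 0 < f ω then c ω else 0) + (if ω = 0 then c ω else 0) +
        (if f ω < 0 then c ω else 0) := by
      intro ω hω
      by_cases h0 : ω = 0
      · subst h0; simp
      · have hne : M ω ≠ ⊥ := by
          intro hbot
          have hz : c ω = 0 := by simpa [hbot] using hcM ω
          exact (DFinsupp.mem_support_iff.1 hω) (Subtype.ext hz)
        rcases lt_or_gt_of_ne (hf ω h0 hne) with h | h
        · simp [h0, h, h.le.not_gt]
        · simp [h0, h, h.le.not_gt]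
    have h3 : ∑ ω ∈ s, (if ω = 0 then c ω else 0) = c 0 := by
      rw [Finset.sum_ite_eq' s 0 c, ite_eq_left_iff]
      intro h
      have : DirectSum.decompose M e 0 = 0 := DFinsupp.notMem_support_iff.1 h
      simp [hc, this]
    rw [Finset.sum_congr rfl h2, Finset.sum_add_distrib, Finset.sum_add_distrib, h3,
      ← Finset.sum_filter, ← Finset.sum_filter] at h1
    exact h1.symm
  set P := ∑ ω ∈ sp, c ω with hPdef
  set N := ∑ ω ∈ sn, c ω with hNdef
  have hPc : ∀ j ∈ sn, P * c j = 0 := fun j hj => by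
    rw [hPdef, Finset.sum_mul]
    exact Finset.sum_eq_zero fun i hi => hcc i hi j hj
  have hPN : P * N = 0 := by
    rw [hNdef, Finset.mul_sum]
    exact Finset.sum_eq_zero hPc
  have hPnil : IsNilpotent P :=
    isNilpotent_of_pos_degree M hmul f sp hpos c fun ω _ => hcM ω
  have hNnil : IsNilpotent N :=
    isNilpotent_of_pos_degree M hmul (-f) sn (fun ω h => by simpa using hneg ω h) c
      fun ω _ => hcM ω
  -- The projection to degree zero, and its values on products of homogeneous elements.
  let p : Matrix (Fin n) (Fin n) F →+ Matrix (Fin n) (Fin n) F :=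
    { toFun := fun x => (DirectSum.decompose M x 0 : M 0)
      map_zero' := by simp
      map_add' := fun x y => by simp }
  have hpe : p e = c 0 := rfl
  have hp0 : ∀ x ∈ M 0, p x = x := fun x hx => DirectSum.decompose_of_mem_same M hx
  have hpne : ∀ i, i ≠ 0 → ∀ x ∈ M i, p x = 0 := fun i hi x hx =>
    DirectSum.decompose_of_mem_ne M hx hi
  have hpm : ∀ i j, p (c i * c j) = if i + j = 0 then c i * c j else 0 := by
    intro i j
    have h := hmul i j _ (hcM i) _ (hcM j)
    split_ifs with hij
    · exact hp0 _ (hij ▸ h)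
    · exact hpne _ hij _ h
  have hpm0 : ∀ i j, f (i + j) ≠ 0 → p (c i * c j) = 0 := by
    intro i j h
    rw [hpm, if_neg]
    intro h0
    exact h (by rw [h0, map_zero])
  have hPP : p (P * P) = 0 := by
    rw [hPdef, Finset.sum_mul_sum, map_sum]
    refine Finset.sum_eq_zero fun i hi => ?_
    rw [map_sum]
    refine Finset.sum_eq_zero fun j hj => hpm0 i j ?_
    rw [map_add]
    exact (add_pos (hpos i hi) (hpos j hj)).ne'
  have hNN : p (N * N) = 0 := by
    rw [hNdef, Finset.sum_mul_sum, map_sum]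
    refine Finset.sum_eq_zero fun i hi => ?_
    rw [map_sum]
    refine Finset.sum_eq_zero fun j hj => hpm0 i j ?_
    rw [map_add]
    exact (add_neg (hneg i hi) (hneg j hj)).ne
  have hZleft : ∀ t : Finset X, (∀ i ∈ t, f i ≠ 0) → p (c 0 * ∑ i ∈ t, c i) = 0 := by
    intro t ht
    rw [Finset.mul_sum, map_sum]
    exact Finset.sum_eq_zero fun i hi => hpm0 0 i (by rw [zero_add]; exact ht i hi)
  have hZright : ∀ t : Finset X, (∀ i ∈ t, f i ≠ 0) → p ((∑ i ∈ t, c i) * c 0) = 0 := by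
    intro t ht
    rw [Finset.sum_mul, map_sum]
    exact Finset.sum_eq_zero fun i hi => hpm0 i 0 (by rw [add_zero]; exact ht i hi)
  have hp' : ∀ i ∈ sp, f i ≠ 0 := fun i hi => (hpos i hi).ne'
  have hn' : ∀ i ∈ sn, f i ≠ 0 := fun i hi => (hneg i hi).ne
  set m := p (N * P) with hm
  have hZ : c 0 = c 0 * c 0 + m := by
    have hZZ : p (c 0 * c 0) = c 0 * c 0 := by rw [hpm, if_pos (add_zero 0)]
    have hexp : e * e = P * P + P * c 0 + P * N + (c 0 * P + c 0 * c 0 + c 0 * N) +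
        (N * P + N * c 0 + N * N) := by
      conv_lhs => rw [hsum]
      noncomm_ring
    have h := congrArg p hexp
    simp only [map_add] at h
    rw [hee, hpe, hPP, hPN, hNN, hZZ, hZright sp hp', hZright sn hn', hZleft sp hp',
      hZleft sn hn', map_zero, ← hm] at h
    simpa using h
  have hmsum : m = ∑ i ∈ sn, ∑ j ∈ sp, if i + j = 0 then c i * c j else 0 := by
    rw [hm, hNdef, hPdef, Finset.sum_mul_sum, map_sum]
    exact Finset.sum_congr rfl fun i _ => by
      rw [map_sum]; exact Finset.sum_congr rfl fun j _ => hpm i j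
  -- Each nonzero term of `m` starts with a component of `N` and ends with one of `P`.
  have hleft : ∀ x, (∀ i ∈ sn, x * c i = 0) → x * m = 0 := by
    intro x hx
    rw [hmsum, Finset.mul_sum]
    refine Finset.sum_eq_zero fun i hi => ?_
    rw [Finset.mul_sum]
    refine Finset.sum_eq_zero fun j _ => ?_
    rw [mul_ite, mul_zero, ← mul_assoc, hx i hi, zero_mul, ite_self]
  have hmc : ∀ k ∈ sn, m * c k = 0 := by
    intro k hk
    rw [hmsum, Finset.sum_mul]
    refine Finset.sum_eq_zero fun i _ => ?_
    rw [Finset.sum_mul]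
    refine Finset.sum_eq_zero fun j hj => ?_
    rw [ite_mul, zero_mul, mul_assoc, hcc j hj k hk, mul_zero, ite_self]
  have hZm : c 0 - c 0 * c 0 = m := sub_eq_iff_eq_add'.2 hZ
  have hZsq : c 0 * c 0 = 0 := by
    refine sq_zero_of_trace (M 0) (fun x hx y hy => ?_) Λ hΛcomm hΛe (c 0) (hcM 0)
      (hV2 e heV) ?_
    · simpa using hmul 0 0 x hx y hy
    · rw [hZm]
      exact hleft m hmc
  have hZeq : c 0 = m := by rw [← hZm, hZsq, sub_zero]
  refine idempotent_eq_zero_of_parts hee hsum hPnil hNnil hPN ?_ ?_ hZsq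
  · rw [hZeq]
    exact hleft P hPc
  · rw [hZeq, hNdef, Finset.mul_sum]
    exact Finset.sum_eq_zero hmc
end

section
/- Let F be a field, n ≥ 1, t ≥ 3, and let e_1, …, e_t ∈ M_n(F) be pairwise orthogonal idempotents with e_1 + ⋯ + e_t = I_n and ranks n_i. Let σ_1, …, σ_t ∈ F satisfy k_1 σ_1 + ⋯ + k_t σ_t ≠ 0 for every nonzero tuple of integers (k_1, …, k_t) with 0 ≤ k_i ≤ n_i, and let V = { a ∈ M_n(F) : e_i a e_j = 0 for all i < j, and Σ_i σ_i Tr(e_i a e_i) = 0 }. Suppose u ∈ e_1 M_n(F) e_2 and w ∈ e_2 M_n(F) e_3 satisfy u w ≠ 0. Then the subspace U = F·(u + w) + V contains no nonzero idempotent of M_n(F); consequently U is a Mathieu subspace of M_n(F) that properly contains V, so V is not a maximal Mathieu subspace of M_n(F). -/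
def IsMaximalMathieu {F : Type*} [Field F] {n : ℕ}
    (V : Submodule F (Matrix (Fin n) (Fin n) F)) : Prop :=
  V ≠ ⊤ ∧ IsMathieu (V : Set (Matrix (Fin n) (Fin n) F)) ∧
    ∀ W : Submodule F (Matrix (Fin n) (Fin n) F),
      V < W → W ≠ ⊤ → ¬ IsMathieu (W : Set (Matrix (Fin n) (Fin n) F))

open Polynomial in
/-- Fitting decomposition inside `F[a]`: some element of the nonunital algebra `a F[a]` is an
idempotent that vanishes only if `a` is nilpotent. It is the value at `a` of the multiple of
`X ^ (k + 1)`, idempotent modulo `X ^ (k + 1) * g`, given by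
a Bézout relation between `X ^ (k + 1)` and `g`, where `X ^ k * g` is the characteristic polynomial
and `X ∤ g`. -/
lemma exists_idempotent_or_nilpotent {F : Type*} [Field F] {n : ℕ}
    (a : Matrix (Fin n) (Fin n) F) :
    ∃ p : F[X], a * aeval a p * (a * aeval a p) = a * aeval a p ∧
      (a * aeval a p = 0 → ∃ k, a ^ k = 0) := by
  obtain ⟨g, hg, hX⟩ :=
    exists_eq_pow_rootMultiplicity_mul_and_not_dvd a.charpoly a.charpoly_monic.ne_zero 0
  set k := a.charpoly.rootMultiplicity 0
  rw [C_0, sub_zero] at hg hX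
  have hcop : IsCoprime (X ^ (k + 1)) g :=
    ((irreducible_X.coprime_iff_not_dvd).2 hX).pow_left
  obtain ⟨r, s, hrs⟩ := hcop
  have hz : aeval a (X ^ (k + 1) * g) = 0 := by
    have : X ^ (k + 1) * g = X * a.charpoly := by rw [hg]; ring
    rw [this, map_mul, Matrix.aeval_self_charpoly, mul_zero]
  have he : a * aeval a (X ^ k * r) = aeval a (X * (X ^ k * r)) := by
    rw [map_mul (aeval a) X, aeval_X]
  refine ⟨X ^ k * r, ?_, fun h0 => ⟨k + 1, ?_⟩⟩
  · rw [he, ← map_mul]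
    have : X * (X ^ k * r) * (X * (X ^ k * r)) =
        X * (X ^ k * r) - r * s * (X ^ (k + 1) * g) := by
      linear_combination (X * (X ^ k * r)) * hrs
    rw [this, map_sub, map_mul (aeval a) (r * s), hz, mul_zero, sub_zero]
  · rw [he] at h0
    have : (X : F[X]) ^ (k + 1) = X ^ (k + 1) * (X * (X ^ k * r)) + s * (X ^ (k + 1) * g) := by
      linear_combination (-X ^ (k + 1)) * hrs
    have h := congrArg (aeval a) this
    rwa [map_add, map_mul (aeval a) _ (X * (X ^ k * r)), map_mul (aeval a) s, hz, h0, mul_zero,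
      mul_zero, add_zero, map_pow, aeval_X] at h

lemma isMathieu_of_no_idempotent {F : Type*} [Field F] {n : ℕ}
    (U : Submodule F (Matrix (Fin n) (Fin n) F)) (hU : ∀ q ∈ U, q * q = q → q = 0) :
    IsMathieu (U : Set (Matrix (Fin n) (Fin n) F)) := by
  intro a b c ha
  have hmem : ∀ p : Polynomial F, a * Polynomial.aeval a p ∈ U := by
    intro p
    rw [Polynomial.aeval_eq_sum_range, Finset.mul_sum]
    refine U.sum_mem fun i _ => ?_
    rw [mul_smul_comm, ← pow_succ']
    exact U.smul_mem _ (ha _ (by omega))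
  obtain ⟨p, hp, hnil⟩ := exists_idempotent_or_nilpotent a
  obtain ⟨k, hk⟩ := hnil (hU _ (hmem p) hp)
  refine ⟨k, fun m hm => ?_⟩
  rw [pow_eq_zero_of_le hm hk, mul_zero, zero_mul]
  exact U.zero_mem

lemma trace_eq_rank_of_idempotent {F : Type*} [Field F] {n : ℕ}
    (a : Matrix (Fin n) (Fin n) F) (ha : a * a = a) : a.trace = (a.rank : F) := by
  have h : IsIdempotentElem (Matrix.toLin' a) := by
    rw [IsIdempotentElem, Module.End.mul_eq_comp, ← Matrix.toLin'_mul, ha]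
  rw [← Matrix.trace_toLin'_eq, (LinearMap.IsIdempotentElem.isProj_range _ h).trace,
    Matrix.rank_eq_finrank_range_toLin a (Pi.basisFun F _) (Pi.basisFun F _)]
  rfl

lemma eq_zero_of_rank_eq_zero {F : Type*} [Field F] {n : ℕ}
    (a : Matrix (Fin n) (Fin n) F) (ha : a.rank = 0) : a = 0 := by
  rw [Matrix.rank, Submodule.finrank_eq_zero, LinearMap.range_eq_bot] at ha
  exact Matrix.toLin'.injective (ha.trans (map_zero _).symm)

/-- The Peirce block `(i, j)` of a product is the sum over `k` of the products of blocks. -/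
lemma block_mul {R : Type*} [Ring R] {t : ℕ} (e : Fin t → R) (hidem : ∀ i, e i * e i = e i)
    (hsum : ∑ i, e i = 1) (x y : R) (i j : Fin t) :
    e i * (x * y) * e j = ∑ k, e i * x * e k * (e k * y * e j) := by
  calc e i * (x * y) * e j = e i * x * (∑ k, e k) * (y * e j) := by
        rw [hsum]; noncomm_ring
    _ = ∑ k, e i * x * e k * (e k * y * e j) := by
        rw [Finset.mul_sum, Finset.sum_mul]
        refine Finset.sum_congr rfl fun k _ => ?_
        conv_lhs => rw [← hidem k]
        noncomm_ring

lemma eq_zero_of_strictly_lower {R : Type*} [Ring R] {t : ℕ} (e : Fin t → R)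
    (hidem : ∀ i, e i * e i = e i) (hsum : ∑ i, e i = 1) (q : R) (hq : q * q = q)
    (h : ∀ i j, i ≤ j → e i * q * e j = 0) : q = 0 := by
  -- Induction on the row: row `i` of `q * q` involves only the rows of `q` above row `i`.
  have key : ∀ i, e i * q = 0 := by
    intro i
    induction i using WellFoundedLT.induction with
    | _ i ih =>
      calc e i * q = e i * q * (∑ k, e k) * q := by rw [hsum, mul_one, mul_assoc, hq]
        _ = ∑ k, e i * q * e k * (e k * q) := by
            rw [Finset.mul_sum, Finset.sum_mul]
            refine Finset.sum_congr rfl fun k _ => ?_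
            conv_lhs => rw [← hidem k]
            noncomm_ring
        _ = 0 := Finset.sum_eq_zero fun k _ => by
            rcases le_or_gt i k with hik | hik
            · rw [h i k hik, zero_mul]
            · rw [ih k hik, mul_zero]
  calc q = (∑ i, e i) * q := by rw [hsum, one_mul]
    _ = 0 := by rw [Finset.sum_mul]; exact Finset.sum_eq_zero fun i _ => key i

/-- The block lower triangular matrices satisfying the weighted trace condition contain no nonzero
idempotent. -/
lemma no_idempotent_lower {F : Type*} [Field F] {n t : ℕ}
    (e : Fin t → Matrix (Fin n) (Fin n) F)
    (hidem : ∀ i, e i * e i = e i) (hsum : ∑ i, e i = 1) (σ : Fin t → F)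
    (hσ : ∀ k : Fin t → ℕ, (∀ i, k i ≤ (e i).rank) → k ≠ 0 → ∑ i, (k i : F) * σ i ≠ 0)
    (q : Matrix (Fin n) (Fin n) F) (hlow : ∀ i j : Fin t, i < j → e i * q * e j = 0)
    (htr : ∑ i, σ i * Matrix.trace (e i * q * e i) = 0) (hq : q * q = q) : q = 0 := by
  have hdiag : ∀ i, e i * q * e i * (e i * q * e i) = e i * q * e i := by
    intro i
    have h := block_mul e hidem hsum q q i i
    rw [hq, Finset.sum_eq_single i] at h
    · exact h.symm
    · intro k _ hk
      rcases lt_or_gt_of_ne hk with hk | hk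
      · rw [hlow k i hk, mul_zero]
      · rw [hlow i k hk, zero_mul]
    · simp
  have hrank : (fun i => (e i * q * e i).rank) = 0 := by
    by_contra hne
    refine hσ _ (fun i => Matrix.rank_mul_le_right _ _) hne ?_
    rw [← htr]
    refine Finset.sum_congr rfl fun i _ => ?_
    rw [trace_eq_rank_of_idempotent _ (hdiag i), mul_comm]
  refine eq_zero_of_strictly_lower e hidem hsum q hq fun i j hij => ?_
  rcases hij.lt_or_eq with hij | rfl
  · exact hlow i j hij
  · exact eq_zero_of_rank_eq_zero _ (congrFun hrank i)

/-- With `t ≥ 3` orthogonal idempotents and `V` as in Example 2.2, if `u ∈ e₁Mₙ(F)e₂` and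
`w ∈ e₂Mₙ(F)e₃` satisfy `uw ≠ 0`, then `U = F(u+w) + V` contains no nonzero idempotent,
hence is a Mathieu subspace properly containing `V`; so `V` is not a maximal Mathieu
subspace of `Mₙ(F)`. -/
theorem stmt6 {F : Type*} [Field F] {n t : ℕ} (hn : 1 ≤ n) (ht : 3 ≤ t)
    (e : Fin t → Matrix (Fin n) (Fin n) F)
    (hidem : ∀ i, e i * e i = e i)
    (horth : ∀ i j, i ≠ j → e i * e j = 0)
    (hsum : ∑ i, e i = 1)
    (σ : Fin t → F)
    (hσ : ∀ k : Fin t → ℕ, (∀ i, k i ≤ (e i).rank) → k ≠ 0 →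
      ∑ i, (k i : F) * σ i ≠ 0)
    (V : Submodule F (Matrix (Fin n) (Fin n) F))
    (hV : (V : Set (Matrix (Fin n) (Fin n) F)) =
      {a | (∀ i j : Fin t, i < j → e i * a * e j = 0) ∧
        ∑ i, σ i * Matrix.trace (e i * a * e i) = 0})
    (u w : Matrix (Fin n) (Fin n) F)
    (hu : e ⟨0, by omega⟩ * u * e ⟨1, by omega⟩ = u)
    (hw : e ⟨1, by omega⟩ * w * e ⟨2, by omega⟩ = w)
    (huw : u * w ≠ 0) :
    (∀ q ∈ Submodule.span F {u + w} ⊔ V, q * q = q → q = 0) ∧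
    IsMathieu ((Submodule.span F {u + w} ⊔ V : Submodule F (Matrix (Fin n) (Fin n) F)) :
      Set (Matrix (Fin n) (Fin n) F)) ∧
    V < Submodule.span F {u + w} ⊔ V ∧
    ¬ IsMaximalMathieu V := by
  have memV : ∀ a, a ∈ V ↔ (∀ i j : Fin t, i < j → e i * a * e j = 0) ∧
      ∑ i, σ i * Matrix.trace (e i * a * e i) = 0 := fun a => by
    rw [← SetLike.mem_coe, hV]; rfl
  -- A matrix lying in the single block `(a, b)` vanishes in every other block.
  have block_off : ∀ (x : Matrix (Fin n) (Fin n) F) (a b i j : Fin t), e a * x * e b = x →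
      i ≠ a ∨ j ≠ b → e i * x * e j = 0 := by
    intro x a b i j hx hne
    rw [← hx]
    rcases hne with h | h
    · rw [mul_assoc (e a), ← mul_assoc (e i), horth i a h, zero_mul, zero_mul]
    · rw [mul_assoc, mul_assoc (e a * x), horth b j h.symm, mul_zero, mul_zero]
  set i0 : Fin t := ⟨0, by omega⟩ with hi0
  set i1 : Fin t := ⟨1, by omega⟩ with hi1
  set i2 : Fin t := ⟨2, by omega⟩ with hi2
  have h01 : i0 ≠ i1 := by simp [hi0, hi1]
  have h12 : i1 ≠ i2 := by simp [hi1, hi2]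
  have hblock : ∀ (c : F) (v : Matrix (Fin n) (Fin n) F), v ∈ V → ∀ i j, i < j →
      e i * (c • (u + w) + v) * e j = c • (e i * u * e j) + c • (e i * w * e j) := by
    intro c v hv i j hij
    rw [mul_add, add_mul, ((memV v).1 hv).1 i j hij, add_zero, mul_smul_comm, smul_mul_assoc,
      mul_add, add_mul, smul_add]
  have hno : ∀ q ∈ Submodule.span F {u + w} ⊔ V, q * q = q → q = 0 := by
    intro q hqU hq
    obtain ⟨y, hy, v, hv, hyv⟩ := Submodule.mem_sup.1 hqU
    obtain ⟨c, rfl⟩ := Submodule.mem_span_singleton.1 hy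
    have hB : ∀ i j, i < j → e i * q * e j = c • (e i * u * e j) + c • (e i * w * e j) := by
      rw [← hyv]; exact hblock c v hv
    have hq01 : e i0 * q * e i1 = c • u := by
      rw [hB i0 i1 (by simp [hi0, hi1]), hu, block_off w i1 i2 _ _ hw (Or.inl h01), smul_zero,
        add_zero]
    have hq12 : e i1 * q * e i2 = c • w := by
      rw [hB i1 i2 (by simp [hi1, hi2]), hw, block_off u i0 i1 _ _ hu (Or.inl h01.symm), smul_zero,
        zero_add]
    have hq0 : ∀ j, i0 < j → j ≠ i1 → e i0 * q * e j = 0 := by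
      intro j hj hj1
      rw [hB i0 j hj, block_off w i1 i2 _ _ hw (Or.inl h01), block_off u i0 i1 _ _ hu (Or.inr hj1),
        smul_zero, add_zero]
    have hq02 : e i0 * q * e i2 = 0 := hq0 i2 (by simp [hi0, hi2]) h12.symm
    have h := block_mul e hidem hsum q q i0 i2
    rw [hq, hq02, Finset.sum_eq_single i1, hq01, hq12] at h
    · have hc : c = 0 := by
        rw [smul_mul_smul_comm, eq_comm, smul_eq_zero] at h
        exact mul_self_eq_zero.1 (h.resolve_right huw)
      rw [hc, zero_smul, zero_add] at hyv
      rw [← hyv] at hq ⊢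
      exact no_idempotent_lower e hidem hsum σ hσ v ((memV v).1 hv).1 ((memV v).1 hv).2 hq
    · intro k _ hk
      rcases eq_or_ne k i0 with rfl | hk0
      · rw [hq02, mul_zero]
      · have : i0 < k := by
          rw [Fin.lt_def]
          have : k.val ≠ 0 := fun h => hk0 (Fin.ext h)
          simp only [hi0]; omega
        rw [hq0 k this hk, zero_mul]
    · simp
  have hM := isMathieu_of_no_idempotent _ hno
  have hlt : V < Submodule.span F {u + w} ⊔ V := by
    refine lt_of_le_of_ne le_sup_right fun heq => ?_
    have hmem : u + w ∈ V := by
      rw [heq]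
      exact Submodule.mem_sup_left (Submodule.mem_span_singleton_self _)
    have h := ((memV _).1 hmem).1 i0 i1 (by simp [hi0, hi1])
    rw [mul_add, add_mul, hu, block_off w i1 i2 _ _ hw (Or.inl h01), add_zero] at h
    exact huw (by rw [h, zero_mul])
  refine ⟨hno, hM, hlt, fun hmax => hmax.2.2 _ hlt (fun htop => ?_) hM⟩
  have h1 := hno 1 (by rw [htop]; exact Submodule.mem_top) (one_mul 1)
  exact huw (by rw [← mul_one (u * w), h1, mul_zero])
end

section
/- Let F be an algebraically closed field, let V be a Mathieu subspace of M_2(F), and let a ∈ V with Tr(a) ≠ 0. Then a is invertible. -/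
/-- For a singular 2×2 matrix, the Cayley-Hamilton relation reads `a ^ 2 = (trace a) • a`; iterating
it gives all the positive powers. -/
theorem pow_succ_of_det_eq_zero {F : Type*} [Field F] (a : Matrix (Fin 2) (Fin 2) F)
    (hdet : a.det = 0) (k : ℕ) : a ^ (k + 1) = a.trace ^ k • a := by
  have hsq : a * a = a.trace • a := by
    rw [Matrix.det_fin_two] at hdet
    ext i j
    fin_cases i <;> fin_cases j <;>
      simp [Matrix.mul_apply, Matrix.trace_fin_two, Fin.sum_univ_two] <;> grind
  induction k with
  | zero => simp
  | succ k ih => rw [pow_succ, ih, Matrix.smul_mul, hsq, smul_smul, pow_succ]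

/-- If `F` is algebraically closed, `V` a (proper) Mathieu subspace of `M₂(F)`, and `a ∈ V`
with `Tr(a) ≠ 0`, then `a` is invertible. -/
theorem stmt10 {F : Type*} [Field F] [IsAlgClosed F]
    (V : Submodule F (Matrix (Fin 2) (Fin 2) F)) (hVproper : V ≠ ⊤)
    (hMS : IsMathieu (V : Set (Matrix (Fin 2) (Fin 2) F)))
    (a : Matrix (Fin 2) (Fin 2) F) (ha : a ∈ V) (htr : Matrix.trace a ≠ 0) :
    IsUnit a := by
  by_contra hu
  have hdet : a.det = 0 := by
    by_contra h
    exact hu ((Matrix.isUnit_iff_isUnit_det a).2 (isUnit_iff_ne_zero.2 h))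
  have hpow := pow_succ_of_det_eq_zero a hdet
  have hV : ∀ m : ℕ, 1 ≤ m → a ^ m ∈ (V : Set (Matrix (Fin 2) (Fin 2) F)) := by
    intro m hm
    obtain ⟨k, rfl⟩ := Nat.exists_eq_add_of_le' hm
    rw [hpow]
    exact V.smul_mem _ ha
  have hideal : ∀ b c : Matrix (Fin 2) (Fin 2) F, b * a * c ∈ V := by
    intro b c
    obtain ⟨N, hN⟩ := hMS a b c hV
    have h := hN (N + 1) (Nat.le_succ N)
    rw [hpow, Matrix.mul_smul, Matrix.smul_mul] at h
    exact (V.smul_mem_iff (pow_ne_zero N htr)).1 h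
  obtain ⟨p, q, hpq⟩ : ∃ p q, a p q ≠ 0 := by
    by_contra! h
    exact htr (by simp [Matrix.trace, h])
  apply hVproper
  rw [eq_top_iff]
  rintro M -
  rw [Matrix.matrix_eq_sum_single M]
  refine V.sum_mem fun i _ => V.sum_mem fun j _ => ?_
  -- Matrix units move the nonzero entry `a p q` to position `(i, j)`.
  have h := hideal (Matrix.single i p 1) (Matrix.single q j ((a p q)⁻¹ * M i j))
  rwa [Matrix.single_mul_mul_single, one_mul, mul_inv_cancel_left₀ hpq] at h
end

section
/- Let F be an algebraically closed field, let V be a Mathieu subspace of M_2(F) with dim_F V = 2, and let a ∈ V with Tr(a) ≠ 0. Then the two eigenvalues of a (the roots in F of its characteristic polynomial) are distinct and both nonzero; equivalently, det(a) ≠ 0 and Tr(a)^2 − 4 det(a) ≠ 0. -/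
theorem eq_top_of_idempotent {F : Type*} [Field F]
    (V : Submodule F (Matrix (Fin 2) (Fin 2) F))
    (hMS : IsMathieu (V : Set (Matrix (Fin 2) (Fin 2) F)))
    (e : Matrix (Fin 2) (Fin 2) F) (he : e ∈ V) (hid : e * e = e) (h0 : e ≠ 0) : V = ⊤ := by
  have hpow : ∀ m : ℕ, 1 ≤ m → e ^ m = e := fun m hm =>
    IsIdempotentElem.pow_eq (by exact hid) (by omega)
  have key : ∀ b c : Matrix (Fin 2) (Fin 2) F, b * e * c ∈ V := by
    intro b c
    obtain ⟨N, hN⟩ := hMS e b c (fun m hm => by rw [hpow m hm]; exact he)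
    have := hN (N + 1) (by omega)
    rwa [hpow _ (by omega)] at this
  obtain ⟨i, j, hij⟩ : ∃ i j, e i j ≠ 0 := by
    by_contra! h
    exact h0 (by ext i j; exact h i j)
  rw [eq_top_iff]
  intro x _
  rw [Matrix.matrix_eq_sum_single x]
  refine V.sum_mem fun k _ => V.sum_mem fun l _ => ?_
  have := key (Matrix.single k i 1) (Matrix.single j l ((e i j)⁻¹ * x k l))
  rwa [Matrix.single_mul_mul_single, one_mul, mul_inv_cancel_left₀ hij] at this

theorem trace_eq_zero_of_det_eq_zero {F : Type*} [Field F]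
    (V : Submodule F (Matrix (Fin 2) (Fin 2) F))
    (hMS : IsMathieu (V : Set (Matrix (Fin 2) (Fin 2) F))) (hV : V ≠ ⊤)
    (e : Matrix (Fin 2) (Fin 2) F) (he : e ∈ V) (hdet : e.det = 0) : e.trace = 0 := by
  by_contra ht
  -- Cayley–Hamilton for a singular matrix
  have hsq : e * e = e.trace • e := by
    rw [Matrix.det_fin_two] at hdet
    ext i j
    fin_cases i <;> fin_cases j <;>
      simp [Matrix.mul_apply, Fin.sum_univ_two, Matrix.trace_fin_two]
    · linear_combination -hdet
    · ring
    · ring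
    · linear_combination -hdet
  apply hV
  refine eq_top_of_idempotent V hMS (e.trace⁻¹ • e) (V.smul_mem _ he) ?_ ?_
  · rw [Matrix.smul_mul, Matrix.mul_smul, hsq, inv_smul_smul₀ ht]
  · intro h
    rcases smul_eq_zero.mp h with h | h
    · exact ht (inv_eq_zero.mp h)
    · exact ht (by simp [h])

/-- Two traceless `2 × 2` matrices `[[α, β], [γ, -α]]` and `[[p, q], [r, -p]]`, the second nonzero,
are proportional if both are isotropic and mutually orthogonal for the determinant form: the squares
of the three minors of their coordinate vectors vanish. -/
theorem exists_smul_of_isotropic {F : Type*} [Field F] (α β γ p q r : F)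
    (hn : α ^ 2 + β * γ = 0) (hb : p ^ 2 + q * r = 0)
    (hort : 2 * α * p + β * r + γ * q = 0) (h0 : ¬ (p = 0 ∧ q = 0 ∧ r = 0)) :
    ∃ c : F, α = c * p ∧ β = c * q ∧ γ = c * r := by
  have h1 : α * q - β * p = 0 := pow_eq_zero_iff (two_ne_zero) |>.mp (by
    linear_combination q ^ 2 * hn + β ^ 2 * hb - β * q * hort)
  have h2 : α * r - γ * p = 0 := pow_eq_zero_iff (two_ne_zero) |>.mp (by
    linear_combination r ^ 2 * hn + γ ^ 2 * hb - γ * r * hort)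
  have h3 : β * r - γ * q = 0 := pow_eq_zero_iff (two_ne_zero) |>.mp (by
    linear_combination (β * r + γ * q - 2 * α * p) * hort - 4 * q * r * hn + 4 * α ^ 2 * hb)
  by_cases hp : p = 0
  · by_cases hq : q = 0
    · have hr : r ≠ 0 := fun hr => h0 ⟨hp, hq, hr⟩
      refine ⟨γ / r, ?_, ?_, ?_⟩ <;> field_simp
      · linear_combination h2
      · linear_combination h3
    · refine ⟨β / q, ?_, ?_, ?_⟩ <;> field_simp
      · linear_combination h1
      · linear_combination -h3
  · refine ⟨α / p, ?_, ?_, ?_⟩ <;> field_simp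
    · linear_combination -h1
    · linear_combination -h2

/-- If `F` is algebraically closed, `V` a Mathieu subspace of `M₂(F)` with `dim_F V = 2`,
and `a ∈ V` with `Tr(a) ≠ 0`, then `a` has distinct nonzero eigenvalues; equivalently,
`det a ≠ 0` and `Tr(a)² - 4 det a ≠ 0`. -/
theorem stmt11 {F : Type*} [Field F] [IsAlgClosed F]
    (V : Submodule F (Matrix (Fin 2) (Fin 2) F))
    (hMS : IsMathieu (V : Set (Matrix (Fin 2) (Fin 2) F)))
    (hdim : Module.finrank F V = 2)
    (a : Matrix (Fin 2) (Fin 2) F) (ha : a ∈ V) (htr : Matrix.trace a ≠ 0) :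
    a.det ≠ 0 ∧ (Matrix.trace a) ^ 2 - 4 * a.det ≠ 0 := by
  have hV : V ≠ ⊤ := by
    rintro rfl
    rw [finrank_top, Module.finrank_matrix] at hdim
    simp at hdim
  have hsing := trace_eq_zero_of_det_eq_zero V hMS hV
  have hd : a.det ≠ 0 := fun h => htr (hsing a ha h)
  refine ⟨hd, fun hdisc => ?_⟩
  have h2 : (2 : F) ≠ 0 := by
    intro h2
    exact htr (pow_eq_zero_iff (two_ne_zero) |>.mp (by
      linear_combination hdisc + 2 * a.det * h2))
  obtain ⟨b₀, hb₀, hb₀a⟩ : ∃ b₀ ∈ V, b₀ ∉ Submodule.span F {a} := by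
    by_contra! h
    have h1 := Submodule.finrank_mono (show V ≤ Submodule.span F {a} from h)
    have h2 := finrank_span_singleton (K := F) (v := a) (by rintro rfl; simp at htr)
    omega
  obtain ⟨b, hb, hbne, hbtr⟩ : ∃ b ∈ V, b ≠ 0 ∧ b.trace = 0 := by
    refine ⟨b₀ - (b₀.trace / a.trace) • a, V.sub_mem hb₀ (V.smul_mem _ ha), fun h => hb₀a ?_, ?_⟩
    · rw [sub_eq_zero.mp h]
      exact Submodule.smul_mem _ _ (Submodule.mem_span_singleton_self a)
    · rw [Matrix.trace_sub, Matrix.trace_smul, smul_eq_mul, div_mul_cancel₀ _ htr, sub_self]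
  have hdetx : ∀ x : F, (x • a + b).det =
      a.det * x ^ 2 + (a.trace * b.trace - (a * b).trace) * x + b.det := by
    intro x
    simp [Matrix.det_fin_two, Matrix.trace_fin_two, Matrix.mul_apply, Fin.sum_univ_two]
    ring
  have hroot : ∀ x : F, (x • a + b).det = 0 → x = 0 := by
    intro x hx
    have := hsing _ (V.add_mem (V.smul_mem x ha) hb) hx
    rw [Matrix.trace_add, Matrix.trace_smul, hbtr, add_zero, smul_eq_mul] at this
    exact (mul_eq_zero.mp this).resolve_right htr
  obtain ⟨x, hx⟩ : ∃ x : F, (x • a + b).det = 0 := by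
    obtain ⟨x, hx⟩ := IsAlgClosed.exists_root
      (Polynomial.C a.det * Polynomial.X ^ 2 +
        Polynomial.C (a.trace * b.trace - (a * b).trace) * Polynomial.X + Polynomial.C b.det)
      (by rw [Polynomial.degree_quadratic hd]; decide)
    refine ⟨x, ?_⟩
    rw [hdetx]
    simpa [Polynomial.IsRoot] using hx
  have hbdet : b.det = 0 := by
    rw [hroot x hx] at hx
    simpa using hx
  -- the second root of the quadratic is `-s / det a`, with `s` its linear coefficient
  have hs : a.trace * b.trace - (a * b).trace = 0 := by
    have := hroot (-(a.trace * b.trace - (a * b).trace) / a.det) (by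
      rw [hdetx, hbdet]; field_simp; ring)
    rcases div_eq_zero_iff.mp this with h | h
    · exact neg_eq_zero.mp h
    · exact absurd h hd
  have hb11 : b 1 1 = -b 0 0 := by
    rw [Matrix.trace_fin_two] at hbtr
    linear_combination hbtr
  obtain ⟨c, hc1, hc2, hc3⟩ := exists_smul_of_isotropic (a 0 0 - a 1 1) (2 * a 0 1) (2 * a 1 0)
    (b 0 0) (b 0 1) (b 1 0)
    (by
      rw [Matrix.trace_fin_two, Matrix.det_fin_two] at hdisc
      linear_combination hdisc)
    (by
      rw [Matrix.det_fin_two, hb11] at hbdet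
      linear_combination -hbdet)
    (by
      simp only [Matrix.trace_fin_two, Matrix.mul_apply, Fin.sum_univ_two, hb11] at hs
      linear_combination -2 * hs)
    (by
      rintro ⟨h00, h01, h10⟩
      apply hbne
      ext i j
      fin_cases i <;> fin_cases j <;> simp [h00, h01, h10, hb11])
  -- `2 a - c b` is the scalar matrix `tr a`
  have hscal : (2 : F) • a - c • b = a.trace • (1 : Matrix (Fin 2) (Fin 2) F) := by
    ext i j
    fin_cases i <;> fin_cases j <;> simp [Matrix.trace_fin_two, hb11]
    · linear_combination hc1
    · linear_combination hc2
    · linear_combination hc3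
    · linear_combination -hc1
  have hone : (1 : Matrix (Fin 2) (Fin 2) F) ∈ V := by
    rw [← V.smul_mem_iff htr, ← hscal]
    exact V.sub_mem (V.smul_mem _ ha) (V.smul_mem _ hb)
  exact hV (eq_top_of_idempotent V hMS 1 hone (one_mul 1) one_ne_zero)
end

section
/- Let F be an algebraically closed field with char F ≠ 2. Then the one-dimensional maximal Mathieu subspaces of M_2(F) are exactly the subspaces of the form F·(I_2 + c) where c ∈ M_2(F) is a nonzero nilpotent matrix; that is, every such F·(I_2 + c) is a maximal Mathieu subspace of M_2(F), and conversely every one-dimensional maximal Mathieu subspace of M_2(F) has this form. -/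
open Matrix

section Helpers

variable {F : Type*} [Field F]

lemma sq_eq (a : Matrix (Fin 2) (Fin 2) F) : a * a = a.trace • a - a.det • 1 := by
  ext i j
  fin_cases i <;> fin_cases j <;>
    simp [Matrix.mul_apply, Fin.sum_univ_two, det_fin_two, trace_fin_two] <;> ring

lemma idem_cases {e : Matrix (Fin 2) (Fin 2) F} (he : e * e = e) :
    e = 0 ∨ e = 1 ∨ (e.det = 0 ∧ e.trace = 1) := by
  by_cases hd : e.det = 0
  · have h := sq_eq e
    rw [he, hd, zero_smul, sub_zero] at h
    by_cases h0 : e = 0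
    · exact Or.inl h0
    · refine Or.inr (Or.inr ⟨hd, ?_⟩)
      have : (e.trace - 1) • e = 0 := by rw [sub_smul, one_smul, ← h, sub_self]
      rcases smul_eq_zero.1 this with h | h
      · exact sub_eq_zero.1 h
      · exact absurd h h0
  · right; left
    have hu : IsUnit e := (Matrix.isUnit_iff_isUnit_det e).2 (isUnit_iff_ne_zero.2 hd)
    exact hu.mul_left_cancel (by rw [he, mul_one])

lemma idem_of_det_zero {a : Matrix (Fin 2) (Fin 2) F} (hd : a.det = 0) (ht : a.trace ≠ 0) :
    (a.trace⁻¹ • a) * (a.trace⁻¹ • a) = a.trace⁻¹ • a ∧ a.trace⁻¹ • a ≠ 0 := by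
  constructor
  · rw [smul_mul_smul_comm, sq_eq, hd, zero_smul, sub_zero, smul_smul]
    congr 1
    field_simp
  · intro h
    rcases smul_eq_zero.1 h with h | h
    · exact ht (inv_eq_zero.1 h)
    · exact ht (by simp [h])

lemma isMathieu_of_idem {V : Submodule F (Matrix (Fin 2) (Fin 2) F)}
    (h : ∀ e ∈ V, e * e = e → e = 0) : IsMathieu (V : Set (Matrix (Fin 2) (Fin 2) F)) := by
  intro a b c ha
  have h1 : a ∈ V := by simpa using ha 1 le_rfl
  have h2 : a * a ∈ V := by simpa [pow_two] using ha 2 (by norm_num)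
  have hsq := sq_eq a
  have hd : a.det = 0 := by
    by_contra hd
    have h3 : a.det⁻¹ • (a.trace • a - a * a) ∈ V :=
      V.smul_mem _ (V.sub_mem (V.smul_mem _ h1) h2)
    rw [hsq, sub_sub_cancel, smul_smul, inv_mul_cancel₀ hd, one_smul] at h3
    exact one_ne_zero (h 1 h3 (one_mul 1))
  have ht : a.trace = 0 := by
    by_contra ht
    obtain ⟨e1, e2⟩ := idem_of_det_zero hd ht
    exact e2 (h _ (V.smul_mem _ h1) e1)
  refine ⟨2, fun m hm => ?_⟩
  have : a ^ 2 = 0 := by rw [pow_two, hsq, hd, ht]; simp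
  rw [pow_eq_zero_of_le hm this]
  simp

lemma exists_mul_mul_ne_zero {a b : Matrix (Fin 2) (Fin 2) F} (ha : a ≠ 0) (hb : b ≠ 0) :
    ∃ z, a * z * b ≠ 0 := by
  obtain ⟨i, j, hij⟩ : ∃ i j, a i j ≠ 0 := by
    by_contra! h
    exact ha (by ext i j; exact h i j)
  obtain ⟨k, l, hkl⟩ : ∃ i j, b i j ≠ 0 := by
    by_contra! h
    exact hb (by ext i j; exact h i j)
  refine ⟨Matrix.single j k 1, fun h => mul_ne_zero hij hkl ?_⟩
  have := congrFun (congrFun h i) l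
  simpa [Matrix.mul_apply, Matrix.single_apply, Finset.sum_ite_eq, ite_and] using this

/-- A nonzero idempotent generates the whole matrix algebra as a two-sided ideal. -/
lemma eq_top_of_isMathieu {V : Submodule F (Matrix (Fin 2) (Fin 2) F)}
    (hV : IsMathieu (V : Set (Matrix (Fin 2) (Fin 2) F)))
    {e : Matrix (Fin 2) (Fin 2) F} (heV : e ∈ V) (he : e * e = e) (h0 : e ≠ 0) : V = ⊤ := by
  have hp : ∀ m : ℕ, 1 ≤ m → e ^ m = e := fun m hm =>
    IsIdempotentElem.pow_eq (a := e) he (by omega)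
  have key : ∀ b c, b * e * c ∈ V := by
    intro b c
    obtain ⟨N, hN⟩ := hV e b c (fun m hm => by rw [hp m hm]; exact heV)
    have := hN (N + 1) (by omega)
    rwa [hp _ (by omega)] at this
  obtain ⟨k, l, hkl⟩ : ∃ i j, e i j ≠ 0 := by
    by_contra! h
    exact h0 (by ext i j; exact h i j)
  rw [eq_top_iff]
  intro x _
  rw [Matrix.matrix_eq_sum_single x]
  refine V.sum_mem fun i _ => V.sum_mem fun j _ => ?_
  have := key (Matrix.single i k (x i j / e k l)) (Matrix.single l j 1)
  rw [Matrix.single_mul_mul_single] at this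
  simpa [hkl] using this

lemma not_isMathieu_of_det_zero {W : Submodule F (Matrix (Fin 2) (Fin 2) F)} (hW : W ≠ ⊤)
    {u : Matrix (Fin 2) (Fin 2) F} (hu : u ∈ W) (hd : u.det = 0) (ht : u.trace ≠ 0) :
    ¬ IsMathieu (W : Set (Matrix (Fin 2) (Fin 2) F)) := fun h =>
  hW (eq_top_of_isMathieu h (W.smul_mem _ hu) (idem_of_det_zero hd ht).1
    (idem_of_det_zero hd ht).2)

lemma not_isMathieu_of_one {W : Submodule F (Matrix (Fin 2) (Fin 2) F)} (hW : W ≠ ⊤)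
    (hu : 1 ∈ W) : ¬ IsMathieu (W : Set (Matrix (Fin 2) (Fin 2) F)) := fun h =>
  hW (eq_top_of_isMathieu h hu (one_mul 1) one_ne_zero)

/-- On nilpotent matrices, `(c, u) ↦ tr (c u)` vanishes only on proportional pairs. -/
lemma proportional {c u : Matrix (Fin 2) (Fin 2) F} (hc : c ≠ 0) (hct : c.trace = 0)
    (hcd : c.det = 0) (hut : u.trace = 0) (hud : u.det = 0) (hcu : (c * u).trace = 0) :
    ∃ k : F, u = k • c := by
  have c11 : c 1 1 = - c 0 0 := by rw [trace_fin_two] at hct; linear_combination hct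
  have u11 : u 1 1 = - u 0 0 := by rw [trace_fin_two] at hut; linear_combination hut
  rw [det_fin_two, c11] at hcd
  rw [det_fin_two, u11] at hud
  simp only [trace_fin_two, Matrix.mul_apply, Fin.sum_univ_two, c11, u11] at hcu
  by_cases h : c 0 1 = 0
  · have h00 : c 0 0 = 0 := by
      have : c 0 0 ^ 2 = 0 := by rw [h] at hcd; linear_combination -hcd
      exact pow_eq_zero_iff (two_ne_zero) |>.1 this
    have h10 : c 1 0 ≠ 0 := by
      intro h10
      apply hc
      ext i j
      fin_cases i <;> fin_cases j <;> simp [h, h00, h10, c11]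
    have u01 : u 0 1 = 0 := by
      have : u 0 1 * c 1 0 = 0 := by rw [h, h00] at hcu; linear_combination hcu
      exact (mul_eq_zero.1 this).resolve_right h10
    have u00 : u 0 0 = 0 := by
      have : u 0 0 ^ 2 = 0 := by rw [u01] at hud; linear_combination -hud
      exact pow_eq_zero_iff (two_ne_zero) |>.1 this
    refine ⟨u 1 0 / c 1 0, ?_⟩
    ext i j
    fin_cases i <;> fin_cases j <;> simp [h, h00, h10, c11, u00, u01, u11]
  · have e1 : u 0 0 * c 0 1 = u 0 1 * c 0 0 := by
      have : (u 0 0 * c 0 1 - u 0 1 * c 0 0) ^ 2 = 0 := by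
        linear_combination (-u 0 1 * c 0 1) * hcu - c 0 1 ^ 2 * hud - u 0 1 ^ 2 * hcd
      exact sub_eq_zero.1 (pow_eq_zero_iff (two_ne_zero) |>.1 this)
    have e2 : u 1 0 * c 0 1 = u 0 1 * c 1 0 := by
      apply mul_right_cancel₀ h
      linear_combination c 0 1 * hcu - 2 * c 0 0 * e1 + 2 * u 0 1 * hcd
    refine ⟨u 0 1 / c 0 1, ?_⟩
    ext i j
    fin_cases i <;> fin_cases j <;> simp [c11, u11] <;> field_simp
    · exact e1
    · exact e2
    · exact e1

lemma exists_quadratic_root [IsAlgClosed F] (b d : F) : ∃ x : F, x ^ 2 + b * x + d = 0 := by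
  obtain ⟨x, hx⟩ := IsAlgClosed.exists_root
    (Polynomial.C 1 * Polynomial.X ^ 2 + Polynomial.C b * Polynomial.X + Polynomial.C d)
    (by rw [Polynomial.degree_quadratic one_ne_zero]; decide)
  exact ⟨x, by simpa [Polynomial.IsRoot] using hx⟩

lemma isMaximal_of_nilpotent [IsAlgClosed F] (h2 : (2 : F) ≠ 0) {c : Matrix (Fin 2) (Fin 2) F}
    (hc : c ≠ 0) (hct : c.trace = 0) (hcd : c.det = 0) :
    IsMaximalMathieu (Submodule.span F {1 + c}) := by
  have c11 : c 1 1 = - c 0 0 := by rw [trace_fin_two] at hct; linear_combination hct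
  have hcd' := hcd
  rw [det_fin_two, c11] at hcd'
  have hone : ∀ s : F, s • (1 + c) ≠ 1 := by
    intro s hs
    have ht : s * 2 = 2 := by
      have := congrArg Matrix.trace hs
      simp only [trace_smul, trace_add, trace_one, hct, Fintype.card_fin] at this
      simpa using this
    have hs1 : s = 1 := mul_right_cancel₀ h2 (by rw [ht, one_mul])
    rw [hs1, one_smul] at hs
    exact hc (by simpa using hs)
  have hno : ∀ e ∈ Submodule.span F {1 + c}, e * e = e → e = 0 := by
    intro e he hee
    obtain ⟨s, rfl⟩ := Submodule.mem_span_singleton.1 he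
    rcases idem_cases hee with h | h | ⟨h, -⟩
    · exact h
    · exact absurd h (hone s)
    · have : s ^ 2 = 0 := by
        rw [det_fin_two] at h
        simp [c11] at h
        linear_combination h + s ^ 2 * (-hcd')
      rw [pow_eq_zero_iff two_ne_zero |>.1 this, zero_smul]
  refine ⟨fun h => ?_, isMathieu_of_idem hno, fun W hW hWt => ?_⟩
  · exact one_ne_zero (hno 1 (h ▸ Submodule.mem_top) (one_mul 1))
  obtain ⟨hle, w, hwW, hw⟩ := SetLike.lt_iff_le_and_exists.1 hW
  have hv : 1 + c ∈ W := hle (Submodule.mem_span_singleton_self _)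
  -- The determinant of `w + x (1 + c)` is monic quadratic in `x`.
  have hdet : ∀ (y : Matrix (Fin 2) (Fin 2) F) (x : F), (y + x • (1 + c)).det =
      x ^ 2 + (y.trace - (c * y).trace) * x + y.det := by
    intro y x
    simp [det_fin_two, trace_fin_two, Matrix.mul_apply, Fin.sum_univ_two, c11]
    linear_combination x ^ 2 * hcd'
  obtain ⟨x, hx⟩ := exists_quadratic_root (w.trace - (c * w).trace) w.det
  rw [← hdet] at hx
  set u := w + x • (1 + c) with hu
  have huW : u ∈ W := W.add_mem hwW (W.smul_mem _ hv)
  by_cases hut : u.trace = 0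
  swap
  · exact not_isMathieu_of_det_zero hWt huW hx hut
  by_cases hcu : (c * u).trace = 0
  swap
  -- The other singular direction of the plane through `u` and `1 + c`.
  · have hW' : u + (c * u).trace • (1 + c) ∈ W := W.add_mem huW (W.smul_mem _ hv)
    refine not_isMathieu_of_det_zero hWt hW' ?_ ?_
    · rw [hdet, hx, hut]; ring
    · rw [trace_add, hut, trace_smul, trace_add, hct, trace_one]
      simpa using ⟨hcu, h2⟩
  obtain ⟨k, hk⟩ := proportional hc hct hcd hut hx hcu
  have hk0 : k ≠ 0 := by
    rintro rfl
    apply hw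
    have : w = (-x) • (1 + c) := by
      rw [neg_smul, eq_neg_iff_add_eq_zero, ← hu, hk, zero_smul]
    rw [this]
    exact Submodule.smul_mem _ _ (Submodule.mem_span_singleton_self _)
  refine not_isMathieu_of_one hWt ?_
  have := W.sub_mem hv (W.smul_mem k⁻¹ huW)
  rwa [hk, smul_smul, inv_mul_cancel₀ hk0, one_smul, add_sub_cancel_right] at this

/-- A line of trace-zero matrices lies strictly inside the Mathieu subspace of all of them. -/
lemma not_isMaximal_of_trace_zero (h2 : (2 : F) ≠ 0) {v : Matrix (Fin 2) (Fin 2) F}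
    (hv : v.trace = 0) : ¬ IsMaximalMathieu (Submodule.span F {v}) := by
  intro h
  have hmem : ∀ y : Matrix (Fin 2) (Fin 2) F,
      y ∈ LinearMap.ker (Matrix.traceLinearMap (Fin 2) F F) ↔ y.trace = 0 := fun y => by simp
  have h1 : (1 : Matrix (Fin 2) (Fin 2) F) ∉ LinearMap.ker (Matrix.traceLinearMap (Fin 2) F F) := by
    rw [hmem, trace_one]; simpa using h2
  refine h.2.2 (LinearMap.ker (Matrix.traceLinearMap (Fin 2) F F)) ?_
    (fun ht => h1 (ht ▸ Submodule.mem_top)) (isMathieu_of_idem fun e he hee => ?_)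
  · refine lt_of_le_of_ne ((Submodule.span_singleton_le_iff_mem _ _).2 ((hmem v).2 hv)) fun heq => ?_
    have hA : !![0, 1; 0, 0] ∈ Submodule.span F {v} := by
      rw [heq, hmem]; simp [trace_fin_two]
    have hB : !![0, 0; 1, 0] ∈ Submodule.span F {v} := by
      rw [heq, hmem]; simp [trace_fin_two]
    obtain ⟨a, ha⟩ := Submodule.mem_span_singleton.1 hA
    obtain ⟨b, hb⟩ := Submodule.mem_span_singleton.1 hB
    have a1 := congrFun (congrFun ha 0) 1
    have a2 := congrFun (congrFun ha 1) 0
    have b2 := congrFun (congrFun hb 1) 0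
    simp at a1 a2 b2
    rcases a2 with h | h <;> simp [h] at a1 b2
  · rcases idem_cases hee with h | h | ⟨-, h⟩
    · exact h
    · exact absurd (h ▸ he) h1
    · rw [(hmem e).1 he] at h
      exact absurd h zero_ne_one

/-- With two distinct eigenvalues, `v` together with a suitable nilpotent matrix spans a larger
proper Mathieu subspace. -/
lemma not_isMaximal_of_ne {v : Matrix (Fin 2) (Fin 2) F} {α β : F} (hab : α ≠ β)
    (ht : v.trace = α + β) (hd : v.det = α * β) (hd0 : v.det ≠ 0) :
    ¬ IsMaximalMathieu (Submodule.span F {v}) := by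
  intro h
  have hsq := sq_eq v
  rw [ht, hd] at hsq
  have hp1 : (v - β • 1) * (v - α • 1) = 0 := by
    simp only [sub_mul, mul_sub, hsq, smul_mul_assoc, one_mul, mul_smul_comm, mul_one]
    module
  have hp2 : (v - α • 1) * (v - β • 1) = 0 := by
    simp only [sub_mul, mul_sub, hsq, smul_mul_assoc, one_mul, mul_smul_comm, mul_one]
    module
  -- `v` is not scalar, since a scalar matrix `x` has eigenvalues `x, x`.
  have hns : ∀ x y : F, x + y = α + β → x * y = α * β → v - x • 1 ≠ 0 := by
    intro x y h1 h2 h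
    have hv : v = x • 1 := sub_eq_zero.1 h
    rw [hv] at ht hd
    simp at ht hd
    have : (α - β) ^ 2 = 0 := by linear_combination (-(α + β) - 2 * x) * ht + 4 * hd
    exact hab (sub_eq_zero.1 (pow_eq_zero_iff two_ne_zero |>.1 this))
  obtain ⟨z, hz⟩ := exists_mul_mul_ne_zero (hns α β rfl rfl)
    (hns β α (add_comm _ _) (mul_comm _ _))
  set n := (v - α • 1) * z * (v - β • 1) with hn
  have hvn : v * n = β • n := by
    have : (v - β • 1) * n = 0 := by rw [hn, mul_assoc, ← mul_assoc, hp1, zero_mul]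
    rwa [sub_mul, smul_mul_assoc, one_mul, sub_eq_zero] at this
  have hnv : n * v = α • n := by
    have : n * (v - α • 1) = 0 := by rw [hn, mul_assoc, hp1, mul_zero]
    rwa [mul_sub, mul_smul_comm, mul_one, sub_eq_zero] at this
  have hnn : n * n = 0 := by
    have : n * n = (v - α • 1) * z * (((v - β • 1) * (v - α • 1)) * (z * (v - β • 1))) := by
      rw [hn]; simp only [mul_assoc]
    rw [this, hp1, zero_mul, mul_zero]
  have hnt : n.trace = 0 := by
    have : (α - β) * n.trace = 0 := by
      have := Matrix.trace_mul_comm v n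
      rw [hvn, hnv, trace_smul, trace_smul, smul_eq_mul, smul_eq_mul] at this
      linear_combination -this
    exact (mul_eq_zero.1 this).resolve_left (sub_ne_zero.2 hab)
  have hnd : n.det = 0 := by
    have := congrArg Matrix.det hnn
    rw [det_mul, det_zero] at this
    exact mul_self_eq_zero.1 this
  have hvnt : (v * n).trace = 0 := by rw [hvn, trace_smul, hnt, smul_zero]
  have hdet : ∀ s t : F, (s • v + t • n).det = s ^ 2 * v.det := by
    intro s t
    rw [trace_fin_two] at hnt
    rw [det_fin_two] at hnd
    simp [trace_fin_two, Matrix.mul_apply, Fin.sum_univ_two] at hvnt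
    simp [det_fin_two]
    linear_combination t ^ 2 * hnd - s * t * hvnt + s * t * (v 0 0 + v 1 1) * hnt
  have hno : ∀ e ∈ Submodule.span F {v, n}, e * e = e → e = 0 := by
    intro e he hee
    obtain ⟨s, t, rfl⟩ := Submodule.mem_span_pair.1 he
    by_cases hs : s = 0
    · rw [hs, zero_smul, zero_add, smul_mul_smul_comm, hnn, smul_zero] at hee
      rw [hs, zero_smul, zero_add, ← hee]
    · have hne : (s • v + t • n).det ≠ 0 := by
        rw [hdet]; exact mul_ne_zero (pow_ne_zero _ hs) hd0
      rcases idem_cases hee with h | h | ⟨h, -⟩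
      · exact h
      · exfalso
        have l : (s * β) • n = n := by
          have := congrArg (· * n) h
          simpa [add_mul, hvn, hnn, smul_smul] using this
        have r : (s * α) • n = n := by
          have := congrArg (n * ·) h
          simpa [mul_add, hnv, hnn, smul_smul] using this
        have : (s * (α - β)) • n = 0 := by rw [mul_sub, sub_smul, l, r, sub_self]
        rcases smul_eq_zero.1 this with h | h
        · exact mul_ne_zero hs (sub_ne_zero.2 hab) h
        · exact hz h
      · exact absurd h hne
  refine h.2.2 (Submodule.span F {v, n}) ?_ ?_ (isMathieu_of_idem hno)
  · refine lt_of_le_of_ne (Submodule.span_mono (by simp)) fun heq => ?_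
    have hmem : n ∈ Submodule.span F {v} := by
      rw [heq]; exact Submodule.subset_span (by simp)
    obtain ⟨k, hk⟩ := Submodule.mem_span_singleton.1 hmem
    have := hdet k 0
    rw [zero_smul, add_zero, hk, hnd] at this
    have hk0 : k = 0 := by
      rcases mul_eq_zero.1 this.symm with h | h
      · exact pow_eq_zero_iff two_ne_zero |>.1 h
      · exact absurd h hd0
    rw [hk0, zero_smul] at hk
    exact hz hk.symm
  · intro htop
    exact one_ne_zero (hno 1 (htop ▸ Submodule.mem_top) (one_mul 1))

end Helpers

/-- If `F` is algebraically closed with `char F ≠ 2`, the one-dimensional maximal Mathieu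
subspaces of `M₂(F)` are exactly the subspaces `F(I₂ + c)` with `c` nonzero nilpotent. -/
theorem stmt13 {F : Type*} [Field F] [IsAlgClosed F] (hchar : ringChar F ≠ 2)
    (V : Submodule F (Matrix (Fin 2) (Fin 2) F)) :
    (Module.finrank F V = 1 ∧ IsMaximalMathieu V) ↔
      ∃ c : Matrix (Fin 2) (Fin 2) F, c ≠ 0 ∧ IsNilpotent c ∧
        V = Submodule.span F {1 + c} := by
  have h2 : (2 : F) ≠ 0 := Ring.two_ne_zero hchar
  constructor
  · rintro ⟨hr, hV⟩
    obtain ⟨v, hvV, hv0, hspan⟩ : ∃ v ∈ V, v ≠ 0 ∧ V = Submodule.span F {v} := by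
      obtain ⟨v, hv0, hv⟩ := finrank_eq_one_iff'.1 hr
      refine ⟨v, v.2, fun h => hv0 (Subtype.ext h), le_antisymm (fun w hw => ?_)
        ((Submodule.span_singleton_le_iff_mem _ _).2 v.2)⟩
      obtain ⟨k, hk⟩ := hv ⟨w, hw⟩
      exact Submodule.mem_span_singleton.2 ⟨k, congrArg Subtype.val hk⟩
    have ht : v.trace ≠ 0 := fun ht => not_isMaximal_of_trace_zero h2 ht (hspan ▸ hV)
    have hd : v.det ≠ 0 := fun hd => not_isMathieu_of_det_zero hV.1 hvV hd ht hV.2.1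
    obtain ⟨α, hα⟩ := exists_quadratic_root (-v.trace) v.det
    have hαβ : α = v.trace - α := by
      by_contra hne
      exact not_isMaximal_of_ne hne (by ring) (by linear_combination hα) hd (hspan ▸ hV)
    have htr : v.trace = 2 * α := by linear_combination -hαβ
    have hdet : v.det = α ^ 2 := by rw [htr] at hα; linear_combination hα
    have hα0 : α ≠ 0 := by
      rintro rfl
      exact ht (by rw [htr, mul_zero])
    have hvc : 1 + (α⁻¹ • v - 1) = α⁻¹ • v := by abel
    refine ⟨α⁻¹ • v - 1, fun h0 => ?_, ⟨2, ?_⟩, ?_⟩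
    · have h1 : (1 : Matrix (Fin 2) (Fin 2) F) ∈ V := by
        rw [← sub_eq_zero.1 h0]; exact V.smul_mem _ hvV
      exact not_isMathieu_of_one hV.1 h1 hV.2.1
    · have hsq := sq_eq v
      rw [htr, hdet] at hsq
      rw [pow_two]
      simp only [sub_mul, mul_sub, smul_mul_smul_comm, hsq, one_mul, mul_one]
      match_scalars <;> field_simp <;> ring
    · rw [hvc, hspan, Submodule.span_singleton_smul_eq (isUnit_iff_ne_zero.2 (inv_ne_zero hα0))]
  · rintro ⟨c, hc, hnil, rfl⟩
    have hct : c.trace = 0 := (Matrix.isNilpotent_trace_of_isNilpotent hnil).eq_zero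
    have hcd : c.det = 0 := by
      obtain ⟨k, hk⟩ := hnil
      have h0 : c.det ^ k = 0 := by rw [← det_pow, hk, det_zero]
      exact eq_zero_of_pow_eq_zero h0
    have hmax := isMaximal_of_nilpotent h2 hc hct hcd
    refine ⟨finrank_span_singleton fun h => ?_, hmax⟩
    have := congrArg Matrix.trace h
    rw [trace_add, hct, trace_one] at this
    exact h2 (by simpa using this)
end

section
/- Let F be an algebraically closed field with char F = 2. Then M_2(F) has no one-dimensional maximal Mathieu subspace: every one-dimensional F-linear subspace of M_2(F) that is a Mathieu subspace of M_2(F) is properly contained in some proper Mathieu subspace of M_2(F). -/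
lemma isMathieu_of_no_idem {F : Type*} [Field F]
    (W : Submodule F (Matrix (Fin 2) (Fin 2) F)) (h1 : (1 : Matrix (Fin 2) (Fin 2) F) ∉ W)
    (h2 : ∀ e ∈ W, e.trace = 1 → e.det = 0 → False) :
    IsMathieu (W : Set (Matrix (Fin 2) (Fin 2) F)) := by
  intro a b c ha
  have ha1 : a ∈ W := by simpa using ha 1 le_rfl
  have ha2 : a ^ 2 ∈ W := ha 2 (by norm_num)
  have ch : a ^ 2 = a.trace • a - a.det • (1 : Matrix (Fin 2) (Fin 2) F) := by
    ext i j
    fin_cases i <;> fin_cases j <;>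
      simp [pow_two, Matrix.mul_apply, Fin.sum_univ_two, Matrix.trace_fin_two,
        Matrix.det_fin_two] <;> ring
  have hd : a.det = 0 := by
    by_contra hd
    apply h1
    have h : a.det • (1 : Matrix (Fin 2) (Fin 2) F) ∈ W := by
      have := W.sub_mem (W.smul_mem a.trace ha1) ha2
      rw [ch] at this
      simpa using this
    simpa [smul_smul, hd] using W.smul_mem a.det⁻¹ h
  have ht : a.trace = 0 := by
    by_contra ht
    refine h2 (a.trace⁻¹ • a) (W.smul_mem _ ha1) ?_ ?_
    · simp [Matrix.trace_smul, ht]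
    · simp [hd]
  have hz : a ^ 2 = 0 := by rw [ch, hd, ht]; simp
  refine ⟨2, fun m hm => ?_⟩
  obtain ⟨k, rfl⟩ := Nat.exists_eq_add_of_le hm
  simp [pow_add, hz]

/-- If `e i j ≠ 0`, both `E₀₀` and `E₀₁` are of the form `b * e * c`, so they would lie on the
line `F A`. -/
lemma idem_eq_zero {F : Type*} [Field F]
    (V : Submodule F (Matrix (Fin 2) (Fin 2) F)) (A : Matrix (Fin 2) (Fin 2) F)
    (hA : ∀ X ∈ V, ∃ k : F, k • A = X)
    (hMS : IsMathieu (V : Set (Matrix (Fin 2) (Fin 2) F)))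
    (e : Matrix (Fin 2) (Fin 2) F) (he : e ∈ V) (hi : IsIdempotentElem e) : e = 0 := by
  have hp : ∀ m : ℕ, 1 ≤ m → e ^ m = e := fun m hm => hi.pow_eq (by omega)
  have key : ∀ b c, b * e * c ∈ V := by
    intro b c
    obtain ⟨N, hN⟩ := hMS e b c (fun m hm => by rw [hp m hm]; exact he)
    have := hN (N + 1) (by omega)
    rwa [hp _ (by omega)] at this
  by_contra hne
  obtain ⟨i, j, hij⟩ : ∃ i j, e i j ≠ 0 := by
    by_contra! h
    exact hne (Matrix.ext h)
  obtain ⟨k, hk⟩ := hA _ (key (Matrix.single 0 i 1) (Matrix.single j 0 1))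
  obtain ⟨l, hl⟩ := hA _ (key (Matrix.single 0 i 1) (Matrix.single j 1 1))
  rw [Matrix.single_mul_mul_single] at hk hl
  have k0 := congrFun (congrFun hk 0) 0
  have k1 := congrFun (congrFun hk 0) 1
  have l1 := congrFun (congrFun hl 0) 1
  simp at k0 k1 l1
  rcases k1 with h | h
  · exact hij (by rw [← k0, h, zero_mul])
  · exact hij (by rw [← l1, h, mul_zero])

/-- If `F` is algebraically closed with `char F = 2`, then `M₂(F)` has no one-dimensional
maximal Mathieu subspace: every one-dimensional Mathieu subspace is properly contained in a
proper Mathieu subspace. -/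
theorem stmt14 {F : Type*} [Field F] [IsAlgClosed F] (hchar : ringChar F = 2)
    (V : Submodule F (Matrix (Fin 2) (Fin 2) F))
    (hdim : Module.finrank F V = 1)
    (hMS : IsMathieu (V : Set (Matrix (Fin 2) (Fin 2) F))) :
    ∃ W : Submodule F (Matrix (Fin 2) (Fin 2) F),
      V < W ∧ W ≠ ⊤ ∧ IsMathieu (W : Set (Matrix (Fin 2) (Fin 2) F)) := by
  have two : (2 : F) = 0 := by
    have := ringChar.Nat.cast_ringChar (R := F)
    rw [hchar] at this
    exact_mod_cast this
  obtain ⟨⟨A, hAV⟩, hA0, hspan⟩ := finrank_eq_one_iff'.mp hdim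
  have hA : ∀ X ∈ V, ∃ k : F, k • A = X := by
    intro X hX
    obtain ⟨k, hk⟩ := hspan ⟨X, hX⟩
    exact ⟨k, congrArg Subtype.val hk⟩
  have hne : A ≠ 0 := fun h => hA0 (Subtype.ext h)
  have noid := idem_eq_zero V A hA hMS
  have h1V : (1 : Matrix (Fin 2) (Fin 2) F) ∉ V :=
    fun h => one_ne_zero (noid 1 h IsIdempotentElem.one)
  by_cases ht : A.trace = 0
  · have h11 : A 1 1 = A 0 0 := by
      rw [Matrix.trace_fin_two] at ht
      linear_combination ht - A 0 0 * two
    obtain ⟨α, β, hαβ⟩ : ∃ α β : F, A 0 0 = α * A 0 1 + β * A 1 0 := by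
      by_cases hq : A 0 1 = 0
      · by_cases hr : A 1 0 = 0
        · exfalso
          have hs : A = A 0 0 • (1 : Matrix (Fin 2) (Fin 2) F) := by
            ext i j
            fin_cases i <;> fin_cases j <;> simp [hq, hr, h11]
          have h0 : A 0 0 ≠ 0 := fun h => hne (by rw [hs, h, zero_smul])
          apply h1V
          have := V.smul_mem (A 0 0)⁻¹ hAV
          rw [hs] at this
          simpa [smul_smul, h0] using this
        · exact ⟨0, A 0 0 / A 1 0, by field_simp; ring⟩
      · exact ⟨A 0 0 / A 0 1, 0, by field_simp; ring⟩
    let W : Submodule F (Matrix (Fin 2) (Fin 2) F) :=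
      { carrier := {X | X.trace = 0 ∧ X 0 0 = α * X 0 1 + β * X 1 0}
        add_mem' := by
          rintro X Y ⟨hX, hX'⟩ ⟨hY, hY'⟩
          refine ⟨by rw [Matrix.trace_add, hX, hY, add_zero], ?_⟩
          simp only [Matrix.add_apply]
          linear_combination hX' + hY'
        zero_mem' := by simp
        smul_mem' := by
          rintro k X ⟨hX, hX'⟩
          refine ⟨by rw [Matrix.trace_smul, hX, smul_zero], ?_⟩
          simp only [Matrix.smul_apply, smul_eq_mul]
          linear_combination k * hX' }
    have memW : ∀ X, X ∈ W ↔ X.trace = 0 ∧ X 0 0 = α * X 0 1 + β * X 1 0 := fun _ => Iff.rfl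
    have h1W : (1 : Matrix (Fin 2) (Fin 2) F) ∉ W := fun h => by
      simpa using ((memW _).1 h).2
    refine ⟨W, ?_, fun h => h1W (h ▸ Submodule.mem_top), isMathieu_of_no_idem W h1W ?_⟩
    · refine lt_of_le_of_ne ?_ ?_
      · intro X hX
        obtain ⟨k, rfl⟩ := hA X hX
        exact W.smul_mem k ((memW _).2 ⟨ht, hαβ⟩)
      · intro h
        have m1 : !![α, 1; 0, α] ∈ V := by
          rw [h, memW]
          refine ⟨?_, by simp⟩
          simp only [Matrix.trace_fin_two_of]
          linear_combination α * two
        have m2 : !![β, 0; 1, β] ∈ V := by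
          rw [h, memW]
          refine ⟨?_, by simp⟩
          simp only [Matrix.trace_fin_two_of]
          linear_combination β * two
        obtain ⟨k, hk⟩ := hA _ m1
        obtain ⟨l, hl⟩ := hA _ m2
        have k0 := congrFun (congrFun hk 0) 1
        have k1 := congrFun (congrFun hk 1) 0
        have l0 := congrFun (congrFun hl 1) 0
        simp at k0 k1 l0
        rcases k1 with h | h <;> simp [h] at k0 l0
    · intro e he h
      rw [((memW e).1 he).1] at h
      exact absurd h zero_ne_one
  · have hd : A.det ≠ 0 := by
      intro hd
      have := noid (A.trace⁻¹ • A) (V.smul_mem _ hAV) (by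
        have h2 : A * A = A.trace • A := by
          rw [Matrix.det_fin_two] at hd
          ext i j
          fin_cases i <;> fin_cases j <;>
            simp [Matrix.mul_apply, Fin.sum_univ_two, Matrix.trace_fin_two] <;>
            first | ring1 | linear_combination -hd
        simp [IsIdempotentElem, h2, smul_smul, ht])
      rcases smul_eq_zero.mp this with h | h
      · exact ht (inv_eq_zero.mp h)
      · exact hne h
    obtain ⟨s, hs⟩ := Module.End.exists_eigenvalue (Matrix.toLin' A)
    obtain ⟨v, hv⟩ := hs.exists_hasEigenvector
    have hv0 : v ≠ 0 := hv.2
    have hAv : A.mulVec v = s • v := by simpa using hv.apply_eq_smul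
    -- A 2 × 2 matrix with eigenvector `v` has its eigenvalue as a root of `x² - tr x + det`.
    have charpoly : ∀ (X : Matrix (Fin 2) (Fin 2) F) (x : F), X.mulVec v = x • v →
        x * x - X.trace * x + X.det = 0 := by
      intro X x hX
      have e0 := congrFun hX 0
      have e1 := congrFun hX 1
      simp [Matrix.mulVec, dotProduct, Fin.sum_univ_two] at e0 e1
      rw [Matrix.trace_fin_two, Matrix.det_fin_two]
      by_contra hc
      apply hv0
      ext i
      fin_cases i
      · refine (mul_eq_zero.mp ?_).resolve_left hc
        simp only [Fin.zero_eta]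
        linear_combination (X 1 1 - x) * e0 - X 0 1 * e1
      · refine (mul_eq_zero.mp ?_).resolve_left hc
        simp only [Fin.mk_one]
        linear_combination (X 0 0 - x) * e1 - X 1 0 * e0
    let W : Submodule F (Matrix (Fin 2) (Fin 2) F) :=
      { carrier := {X | A.trace • X.mulVec v = (s * X.trace) • v}
        add_mem' := by
          intro X Y hX hY
          simp only [Set.mem_ofPred_eq] at *
          rw [Matrix.add_mulVec, smul_add, hX, hY, Matrix.trace_add, mul_add, add_smul]
        zero_mem' := by simp
        smul_mem' := by
          intro k X hX
          simp only [Set.mem_ofPred_eq] at *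
          rw [Matrix.smul_mulVec, smul_comm, hX, Matrix.trace_smul, smul_smul, smul_eq_mul,
            mul_left_comm] }
    have memW : ∀ X, X ∈ W ↔ A.trace • X.mulVec v = (s * X.trace) • v := fun _ => Iff.rfl
    have h1W : (1 : Matrix (Fin 2) (Fin 2) F) ∉ W := fun h => by
      rw [memW, Matrix.one_mulVec] at h
      simp [two, ht, hv0] at h
    refine ⟨W, ?_, fun h => h1W (h ▸ Submodule.mem_top), isMathieu_of_no_idem W h1W ?_⟩
    · refine lt_of_le_of_ne ?_ ?_
      · intro X hX
        obtain ⟨k, rfl⟩ := hA X hX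
        exact W.smul_mem k ((memW _).2 (by rw [hAv, smul_smul, mul_comm]))
      · intro h
        -- The nilpotent matrix with kernel and image `F v`; signs are immaterial as `2 = 0`.
        have m : !![v 0 * v 1, v 0 * v 0; v 1 * v 1, v 0 * v 1] ∈ V := by
          rw [h, memW]
          have t0 : (!![v 0 * v 1, v 0 * v 0; v 1 * v 1, v 0 * v 1]).trace = 0 := by
            simp only [Matrix.trace_fin_two_of]
            linear_combination v 0 * v 1 * two
          rw [t0, mul_zero, zero_smul]
          have : (!![v 0 * v 1, v 0 * v 0; v 1 * v 1, v 0 * v 1]).mulVec v = 0 := by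
            ext i
            fin_cases i <;> simp [Matrix.mulVec, dotProduct, Fin.sum_univ_two]
            · linear_combination v 0 * v 0 * v 1 * two
            · linear_combination v 0 * v 1 * v 1 * two
          rw [this, smul_zero]
        obtain ⟨k, hk⟩ := hA _ m
        have hk0 : k = 0 := by
          have := congrArg Matrix.trace hk
          rw [Matrix.trace_smul, Matrix.trace_fin_two_of, smul_eq_mul] at this
          refine (mul_eq_zero.mp (?_ : k * A.trace = 0)).resolve_right ht
          linear_combination this + v 0 * v 1 * two
        rw [hk0, zero_smul] at hk
        have k0 := congrFun (congrFun hk 0) 1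
        have k1 := congrFun (congrFun hk 1) 0
        simp at k0 k1
        apply hv0
        ext i
        fin_cases i
        · exact k0
        · exact k1
    · intro e he het hed
      rw [memW, het, mul_one] at he
      have hev : e.mulVec v = (s / A.trace) • v := by
        rw [div_eq_inv_mul, ← smul_smul, ← he, smul_smul, inv_mul_cancel₀ ht, one_smul]
      have h1 := charpoly e _ hev
      have h2 := charpoly A s hAv
      rw [het, hed] at h1
      field_simp at h1
      apply hd
      -- With `τ = tr A`, `h1` says `s (s - τ) = 0`, while `h2` says `det A = s (τ - s)`.
      linear_combination h2 - h1
end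

section
/- Let K be a field and s ∈ K with s ≠ 0, s ≠ 1, s ≠ −1, and s ≠ t^2 for all t ∈ K. Let a = [[1, 0], [0, s]], b = [[0, 1], [1, 0]] ∈ M_2(K), and V = K·a + K·b. Then every nonzero element of V is invertible, V is a Mathieu subspace of M_2(K), and V is a maximal Mathieu subspace of M_2(K). -/
theorem mem_span_iff {K : Type*} [Field K] (s : K) (v : Matrix (Fin 2) (Fin 2) K) :
    v ∈ Submodule.span K
      {(!![1, 0; 0, s] : Matrix (Fin 2) (Fin 2) K), (!![0, 1; 1, 0] : Matrix (Fin 2) (Fin 2) K)} ↔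
    ∃ x y : K, v = !![x, y; y, s * x] := by
  rw [Submodule.mem_span_pair]
  refine exists_congr fun x => exists_congr fun y => ?_
  rw [eq_comm]
  simp [Matrix.smul_of, mul_comm]

/-- The determinant form of `V` is anisotropic because `s` is not a square. -/
theorem eq_zero_of_form_eq_zero {K : Type*} [Field K] {s : K} (hsq : ∀ t : K, s ≠ t ^ 2)
    {x y : K} (h : s * x ^ 2 = y ^ 2) : x = 0 ∧ y = 0 := by
  have hx : x = 0 := by
    by_contra hx
    apply hsq (y / x)
    field_simp
    exact h
  subst hx
  refine ⟨rfl, ?_⟩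
  have : y ^ 2 = 0 := by rw [← h]; ring
  exact pow_eq_zero_iff (two_ne_zero) |>.1 this

theorem eq_zero_of_sq_mem {K : Type*} [Field K] {s : K} (hs1 : s ≠ 1)
    (hsq : ∀ t : K, s ≠ t ^ 2) {x y x' y' : K}
    (h : (!![x, y; y, s * x] : Matrix (Fin 2) (Fin 2) K) ^ 2 = !![x', y'; y', s * x']) :
    x = 0 ∧ y = 0 := by
  have h00 := congrFun (congrFun h 0) 0
  have h11 := congrFun (congrFun h 1) 1
  simp [pow_two] at h00 h11
  apply eq_zero_of_form_eq_zero hsq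
  apply mul_left_cancel₀ (sub_ne_zero.2 hs1)
  linear_combination h11 - s * h00

/-- A Mathieu subspace containing a nonzero idempotent is everything; it is enough here to treat
idempotents whose upper left entry is nonzero. -/
theorem eq_top_of_idempotent_mem_s17 {K : Type*} [Field K]
    {W : Submodule K (Matrix (Fin 2) (Fin 2) K)}
    (hW : IsMathieu (W : Set (Matrix (Fin 2) (Fin 2) K)))
    {e : Matrix (Fin 2) (Fin 2) K} (he : e ∈ W) (hee : IsIdempotentElem e) (h0 : e 0 0 ≠ 0) :
    W = ⊤ := by
  have key : ∀ b c, b * e * c ∈ W := by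
    intro b c
    have hpow : ∀ m : ℕ, 1 ≤ m → e ^ m = e := fun m hm => hee.pow_eq (by omega)
    obtain ⟨N, hN⟩ := hW e b c fun m hm => by rw [hpow m hm]; exact he
    have := hN (N + 1) (by omega)
    rwa [hpow (N + 1) (by omega)] at this
  rw [eq_top_iff]
  rintro z -
  -- the two summands reproduce the first and the second column of `z`
  have hz : z = !![z 0 0 / e 0 0, 0; z 1 0 / e 0 0, 0] * e * !![1, 0; 0, 0] +
      !![z 0 1 / e 0 0, 0; z 1 1 / e 0 0, 0] * e * !![0, 1; 0, 0] := by
    ext i j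
    fin_cases i <;> fin_cases j <;> simp [Matrix.vecMul, dotProduct, Matrix.mul_apply, h0]
  rw [hz]
  exact W.add_mem (key _ _) (key _ _)

/-- Let `K` be a field and `s ∈ K` with `s ≠ 0, ±1` and `s` not a square in `K`. With
`a = [[1,0],[0,s]]`, `b = [[0,1],[1,0]]` and `V = Ka + Kb`, every nonzero element of `V` is
invertible, `V` is a Mathieu subspace of `M₂(K)`, and `V` is a maximal Mathieu subspace. -/
theorem stmt17 {K : Type*} [Field K] (s : K)
    (hs0 : s ≠ 0) (hs1 : s ≠ 1) (hsm1 : s ≠ -1) (hsq : ∀ t : K, s ≠ t ^ 2)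
    (V : Submodule K (Matrix (Fin 2) (Fin 2) K))
    (hV : V = Submodule.span K
      {(!![1, 0; 0, s] : Matrix (Fin 2) (Fin 2) K), (!![0, 1; 1, 0] : Matrix (Fin 2) (Fin 2) K)}) :
    (∀ v ∈ V, v ≠ 0 → IsUnit v) ∧
    IsMathieu (V : Set (Matrix (Fin 2) (Fin 2) K)) ∧
    IsMaximalMathieu V := by
  have hmem : ∀ v, v ∈ V ↔ ∃ x y : K, v = !![x, y; y, s * x] := by
    intro v
    rw [hV, mem_span_iff]
  have hzero : (!![0, 0; 0, s * 0] : Matrix (Fin 2) (Fin 2) K) = 0 := by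
    ext i j
    fin_cases i <;> fin_cases j <;> simp
  have hM : IsMathieu (V : Set (Matrix (Fin 2) (Fin 2) K)) := by
    intro a b c ha
    obtain ⟨x, y, hxy⟩ := (hmem _).1 (ha 1 le_rfl)
    obtain ⟨x', y', hxy'⟩ := (hmem _).1 (ha 2 (by omega))
    rw [pow_one] at hxy
    rw [hxy] at hxy'
    obtain ⟨rfl, rfl⟩ := eq_zero_of_sq_mem hs1 hsq hxy'
    rw [hzero] at hxy
    refine ⟨1, fun m hm => ?_⟩
    rw [hxy, zero_pow (by omega), mul_zero, zero_mul]
    exact V.zero_mem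
  refine ⟨?_, hM, ?_, hM, ?_⟩
  · intro v hv hv0
    obtain ⟨x, y, rfl⟩ := (hmem v).1 hv
    rw [Matrix.isUnit_iff_isUnit_det, Matrix.det_fin_two_of, isUnit_iff_ne_zero]
    intro h
    obtain ⟨rfl, rfl⟩ := eq_zero_of_form_eq_zero hsq (x := x) (y := y) (by linear_combination h)
    exact hv0 hzero
  · intro htop
    obtain ⟨x, y, h⟩ := (hmem !![0, 1; 0, 0]).1 (htop ▸ Submodule.mem_top)
    have h01 := congrFun (congrFun h 0) 1
    have h10 := congrFun (congrFun h 1) 0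
    simp at h01 h10
    exact one_ne_zero (h01.trans h10.symm)
  · intro W hVW hWtop hWM
    obtain ⟨z, hzW, hzV⟩ := SetLike.exists_of_lt hVW
    have hv : ∀ x y : K, !![x, y; y, s * x] ∈ W := fun x y => hVW.le ((hmem _).2 ⟨x, y, rfl⟩)
    obtain ⟨γ, hγ⟩ : ∃ γ, γ = z 1 0 - z 0 1 := ⟨_, rfl⟩
    obtain ⟨δ, hδ⟩ : ∃ δ, δ = z 1 1 - s * z 0 0 := ⟨_, rfl⟩
    have hr : !![0, 0; γ, δ] ∈ W := by
      have h : !![0, 0; γ, δ] = z - !![z 0 0, z 0 1; z 0 1, s * z 0 0] := by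
        ext i j
        fin_cases i <;> fin_cases j <;> simp [hγ, hδ]
      rw [h]
      exact W.sub_mem hzW (hv _ _)
    have hs1' : 1 + s ≠ 0 := fun h => hsm1 (by linear_combination h)
    by_cases hd : δ = 0
    · have hg : γ ≠ 0 := by
        intro hg
        refine hzV ((hmem z).2 ⟨z 0 0, z 0 1, ?_⟩)
        ext i j
        fin_cases i <;> fin_cases j <;> simp
        · linear_combination hg - hγ
        · linear_combination hd - hδ
      refine hWtop (eq_top_of_idempotent_mem_s17 hWM
        (e := !![(1 + s)⁻¹, s * (1 + s)⁻¹; (1 + s)⁻¹, s * (1 + s)⁻¹]) ?_ ?_ ?_)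
      · have h : !![(1 + s)⁻¹, s * (1 + s)⁻¹; (1 + s)⁻¹, s * (1 + s)⁻¹] =
            !![(1 + s)⁻¹, s * (1 + s)⁻¹; s * (1 + s)⁻¹, s * (1 + s)⁻¹] +
              ((1 - s) * (1 + s)⁻¹ / γ) • !![0, 0; γ, δ] := by
          ext i j
          fin_cases i <;> fin_cases j <;> simp [hd]
          field_simp
          ring
        rw [h]
        exact W.add_mem (hv _ _) (W.smul_mem _ hr)
      · unfold IsIdempotentElem
        ext i j
        fin_cases i <;> fin_cases j <;> simp [Matrix.mul_apply] <;> field_simp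
      · simpa using hs1'
    · refine hWtop (eq_top_of_idempotent_mem_s17 hWM (e := !![1, γ * s / δ; 0, 0]) ?_ ?_ ?_)
      · have h : !![1, γ * s / δ; 0, 0] =
            !![1, γ * s / δ; γ * s / δ, s * 1] + (-s / δ) • !![0, 0; γ, δ] := by
          ext i j
          fin_cases i <;> fin_cases j <;> simp [hd]
          field_simp
          ring
        rw [h]
        exact W.add_mem (hv _ _) (W.smul_mem _ hr)
      · unfold IsIdempotentElem
        ext i j
        fin_cases i <;> fin_cases j <;> simp [Matrix.mul_apply]
      · simp
end

section
/- Let K be a field and s ∈ K with s ≠ 0, s ≠ 1, s ≠ −1, and s ≠ t^2 for all t ∈ K. Let a = [[1, 0], [0, s]], b = [[0, 1], [1, 0]] ∈ M_2(K). Let L be a field extension of K containing a square root of s (i.e., there exists r ∈ L with r^2 equal to the image of s in L). Then the L-linear subspace U = L·a' + L·b' of M_2(L), where a' and b' denote the images of a and b under the entrywise inclusion M_2(K) → M_2(L), contains the nonzero idempotent (1 + s)^{-1}(a' + r·b') and is not a Mathieu subspace of M_2(L). In particular, Mathieu subspaces are not in general preserved under base field extension. -/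
/-- Let `K` be a field, `s ∈ K` with `s ≠ 0, ±1` and not a square, and let `L ⊇ K` contain a
square root `r` of `s`. Then `U = La' + Lb'` (images of `a = [[1,0],[0,s]]`,
`b = [[0,1],[1,0]]` in `M₂(L)`) contains the nonzero idempotent `(1+s)⁻¹(a' + r b')`, and
`U` is not a Mathieu subspace of `M₂(L)`. In particular, Mathieu subspaces are not in
general preserved under base field extension. -/
theorem stmt18 {K L : Type*} [Field K] [Field L] (s : K)
    (hs0 : s ≠ 0) (hs1 : s ≠ 1) (hsm1 : s ≠ -1) (hsq : ∀ t : K, s ≠ t ^ 2)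
    (f : K →+* L) (r : L) (hr : r ^ 2 = f s)
    (a' b' : Matrix (Fin 2) (Fin 2) L)
    (ha' : a' = (!![1, 0; 0, s] : Matrix (Fin 2) (Fin 2) K).map f)
    (hb' : b' = (!![0, 1; 1, 0] : Matrix (Fin 2) (Fin 2) K).map f)
    (U : Submodule L (Matrix (Fin 2) (Fin 2) L))
    (hU : U = Submodule.span L {a', b'})
    (c : Matrix (Fin 2) (Fin 2) L)
    (hc : c = (1 + f s)⁻¹ • (a' + r • b')) :
    c ∈ U ∧ c * c = c ∧ c ≠ 0 ∧
    ¬ IsMathieu (U : Set (Matrix (Fin 2) (Fin 2) L)) := by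
  have h1 : (1 + f s) ≠ 0 := by
    intro h
    apply hsm1
    apply f.injective
    rw [map_neg, map_one]
    exact (neg_eq_of_add_eq_zero_right h).symm
  have hr0 : r ≠ 0 := by
    rintro rfl
    apply hs0
    apply f.injective
    rw [map_zero, ← hr]
    ring
  have hce : c = (1 + f s)⁻¹ • !![1, r; r, f s] := by
    rw [hc, ha', hb']
    ext i j
    fin_cases i <;> fin_cases j <;> simp
  have hcU : c ∈ U := by
    rw [hc, hU]
    exact Submodule.smul_mem _ _ (Submodule.add_mem _ (Submodule.subset_span (by simp))
      (Submodule.smul_mem _ _ (Submodule.subset_span (by simp))))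
  have hcc : c * c = c := by
    rw [← hr] at h1
    rw [hce, ← hr]
    ext i j
    fin_cases i <;> fin_cases j <;> simp [Matrix.mul_apply, Fin.sum_univ_two] <;>
      field_simp
  have hsymm : ∀ x ∈ U, x 0 1 = x 1 0 := by
    intro x hx
    rw [hU, Submodule.mem_span_pair] at hx
    obtain ⟨p, q, rfl⟩ := hx
    simp [ha', hb']
  have hc10 : c 1 0 ≠ 0 := by
    rw [hce]
    simpa using ⟨h1, hr0⟩
  have hpow : ∀ m : ℕ, 1 ≤ m → c ^ m = c := fun m hm =>
    IsIdempotentElem.pow_eq hcc (by omega)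
  refine ⟨hcU, hcc, fun h => hc10 (by simp [h]), fun hM => ?_⟩
  obtain ⟨N, hN⟩ := hM c 1 !![1, 0; 0, 0] fun m hm => by
    rw [hpow m hm]
    exact hcU
  have h := hsymm _ (hN (N + 1) (by omega))
  rw [hpow (N + 1) (by omega)] at h
  apply hc10
  simpa [Matrix.mul_apply, Fin.sum_univ_two] using h.symm
end
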